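/- arXiv:1809.01468 — 4 statements merged into one kernel-verified Lean document; each statement's English description precedes it below -/
import Mathlib

section
/- Let G be a graph with n ≥ 2 vertices and average degree d. Then G has a (possibly non-induced) subgraph with all degrees lying in the interval [d', 6d'], where d' = (⌊(d/4 − 1)/⌈log₂ n⌉⌋ + 1)/6. -/
/-!
Passing to a subgraph of minimum degree `d / 2` and then to a maximum cut gives a bipartite graph of
minimum degree at least `d / 4`. One of its vertex classes, `A`, has `|N(A)| ≤ |A|`. A minimal
nonempty `X ⊆ A` with `|N(X)| ≤ |X|` satisfies Hall's condition, so some matching covers exactly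
`X ∪ N(X)`. Deleting this matching lowers degrees by at most one and keeps `|N(X)| ≤ |X|`, so
iterating inside `X` yields `⌈d / 4⌉` edge-disjoint matchings with nested vertex sets.

By pigeonhole over the dyadic scales of their sizes, `D` of these matchings have sizes within a
factor two of each other. Their union has maximum degree at most `D` and, being supported on the
vertices of the largest one, average degree at least `D / 2`; hence it contains a subgraph of
minimum degree at least `D / 4`.
-/

theorem exists_subset_equiv_biUnion {ι α : Type*} [DecidableEq α] {t : ι → Finset α}
    {A : Finset ι} (hA : A.Nonempty) (ht : ∀ a ∈ A, (t a).Nonempty)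
    (hcard : (A.biUnion t).card ≤ A.card) :
    ∃ X ⊆ A, X.Nonempty ∧ ∃ e : X ≃ X.biUnion t, ∀ x : X, (e x : α) ∈ t x := by
  obtain ⟨X, hXA, ⟨hX, hXcard⟩, hXmin⟩ := exists_minimal_le_of_wellFoundedLT
    (fun X : Finset ι ↦ X.Nonempty ∧ (X.biUnion t).card ≤ X.card) A ⟨hA, hcard⟩
  have hall : ∀ s ⊆ X, s.card ≤ (s.biUnion t).card := by
    classical
    by_contra! hcon
    obtain ⟨s, hsX, hs⟩ := hcon
    obtain ⟨a, ha⟩ : s.Nonempty := Finset.card_pos.1 (by lia)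
    have hta : (t a).card ≤ (s.biUnion t).card :=
      Finset.card_le_card (Finset.subset_biUnion_of_mem t ha)
    have hta_pos := (ht a (hXA (hsX ha))).card_pos
    have herase := Finset.card_erase_add_one ha
    have herase_biUnion : ((s.erase a).biUnion t).card ≤ (s.biUnion t).card :=
      Finset.card_le_card (Finset.biUnion_subset_biUnion_of_subset_left t (s.erase_subset a))
    have hX_le : X ⊆ s.erase a :=
      hXmin ⟨Finset.card_pos.1 (by lia), by lia⟩ ((s.erase_subset a).trans hsX)
    exact Finset.notMem_erase a s (hX_le (hsX ha))
  obtain ⟨f, hf_inj, hf_mem⟩ := (Finset.all_card_le_biUnion_card_iff_exists_injective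
    fun x : X ↦ t x).1 fun s ↦ by
      classical
      simpa only [Finset.image_biUnion, Finset.card_image_of_injective s Subtype.val_injective]
        using hall (s.image (↑)) (Finset.image_subset_iff.2 fun x _ ↦ x.2)
  let g : X → X.biUnion t := fun x ↦ ⟨f x, Finset.mem_biUnion.2 ⟨x, x.2, hf_mem x⟩⟩
  have hg_inj : Function.Injective g := fun x y hxy ↦ hf_inj (congrArg Subtype.val hxy)
  have hg : Function.Bijective g :=
    (Fintype.bijective_iff_injective_and_card g).2
      ⟨hg_inj, le_antisymm (Fintype.card_le_of_injective g hg_inj) (by simpa using hXcard)⟩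
  exact ⟨X, hXA, hX, Equiv.ofBijective g hg, hf_mem⟩

theorem lt_two_mul_of_log_two_eq {m n : ℕ} (hn : n ≠ 0) (h : Nat.log 2 m = Nat.log 2 n) :
    m < 2 * n := by
  have hm_lt := Nat.lt_pow_succ_log_self one_lt_two m
  have hn_le := Nat.pow_log_le_self 2 hn
  rw [h, pow_succ] at hm_lt
  lia

theorem exists_nat_eq_floor_sub_one_div_add_one {x L : ℝ} {ℓ : ℕ} (hx : 0 ≤ x) (hℓ : 1 ≤ ℓ)
    (hℓL : ℓ ≤ L) : ∃ D : ℕ, (⌊(x - 1) / L⌋ : ℝ) + 1 = D ∧ (0 < D → ℓ * (D - 1 : ℕ) < x) := by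
  have hL : 1 ≤ L := (Nat.one_le_cast.2 hℓ).trans hℓL
  have hfloor : -1 ≤ ⌊(x - 1) / L⌋ := by
    rw [Int.le_floor, le_div_iff₀ (by linarith)]
    push_cast
    linarith
  obtain ⟨D, hD⟩ := Int.eq_ofNat_of_zero_le (show 0 ≤ ⌊(x - 1) / L⌋ + 1 by lia)
  have hD_eq : (⌊(x - 1) / L⌋ : ℝ) + 1 = D := by exact_mod_cast hD
  refine ⟨D, hD_eq, fun hD_pos ↦ ?_⟩
  have hD_cast : ((D - 1 : ℕ) : ℝ) = ⌊(x - 1) / L⌋ := by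
    rw [Nat.cast_pred hD_pos]
    linarith
  calc (ℓ * (D - 1 : ℕ) : ℝ) ≤ L * (D - 1 : ℕ) := by gcongr
    _ ≤ L * ((x - 1) / L) := by
      rw [hD_cast]
      gcongr
      exact Int.floor_le _
    _ = x - 1 := mul_div_cancel₀ _ (by linarith)
    _ < x := by linarith

variable {V : Type*} {G H M : SimpleGraph V}

/-- The open neighbourhood `N_G(A)` of a vertex set, for comparing `|N_G(A)|` with `|A|` in Hall's
condition. Vertices of `A` with a neighbour in `A` are included. -/
def neighborhood (G : SimpleGraph V) (A : Set V) : Set V := ⋃ a ∈ A, G.neighborSet a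

theorem mem_neighborhood {A : Set V} {w : V} : w ∈ neighborhood G A ↔ ∃ a ∈ A, G.Adj a w := by
  simp [neighborhood]

theorem neighborhood_mono {A B : Set V} (hGH : G ≤ H) (hAB : A ⊆ B) :
    neighborhood G A ⊆ neighborhood H B := fun w hw ↦ by
  obtain ⟨a, ha, haw⟩ := mem_neighborhood.1 hw
  exact mem_neighborhood.2 ⟨a, hAB ha, hGH haw⟩

/-- The subgraph of `G` with the edges of `H ≤ G`, on the non-isolated vertices of `H`;
it turns a member of the lattice `SimpleGraph V` into a `G.Subgraph` without isolated vertices. -/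
def supportSubgraph (h : H ≤ G) : G.Subgraph where
  verts := H.support
  Adj := H.Adj
  adj_sub := @h
  edge_vert := fun hadj ↦ hadj.left_mem_support
  symm := H.symm

theorem neighborSet_supportSubgraph (h : H ≤ G) (v : V) :
    (supportSubgraph h).neighborSet v = H.neighborSet v := rfl

/-- A family of nonempty, pairwise edge-disjoint matchings whose sets of matched vertices are
nested. A matching is encoded as a graph on `V` with all degrees at most one, so that its matched
vertices are its support. -/
structure IsMatchingChain (𝓜 : Finset (SimpleGraph V)) : Prop where
  ne_bot : ∀ M ∈ 𝓜, M ≠ ⊥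
  subsingleton_neighborSet : ∀ M ∈ 𝓜, ∀ v, (M.neighborSet v).Subsingleton
  pairwiseDisjoint : (𝓜 : Set (SimpleGraph V)).PairwiseDisjoint id
  support_total : ∀ M ∈ 𝓜, ∀ M' ∈ 𝓜, M.support ⊆ M'.support ∨ M'.support ⊆ M.support

theorem isMatchingChain_empty : IsMatchingChain (∅ : Finset (SimpleGraph V)) := by
  constructor <;> simp

namespace IsMatchingChain

variable {𝓜 𝓝 : Finset (SimpleGraph V)}

theorem subset (h : IsMatchingChain 𝓜) (hsub : 𝓝 ⊆ 𝓜) : IsMatchingChain 𝓝 where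
  ne_bot M hM := h.ne_bot M (hsub hM)
  subsingleton_neighborSet M hM := h.subsingleton_neighborSet M (hsub hM)
  pairwiseDisjoint := h.pairwiseDisjoint.subset hsub
  support_total M hM M' hM' := h.support_total M (hsub hM) M' (hsub hM')

theorem cons (h : IsMatchingChain 𝓜) (hM_notMem : M ∉ 𝓜) (hM_ne : M ≠ ⊥)
    (hM : ∀ v, (M.neighborSet v).Subsingleton)
    (hdisj : ∀ M' ∈ 𝓜, Disjoint M M') (hsupp : ∀ M' ∈ 𝓜, M'.support ⊆ M.support) :
    IsMatchingChain (𝓜.cons M hM_notMem) where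
  ne_bot := (Finset.forall_mem_cons _ _).2 ⟨hM_ne, h.ne_bot⟩
  subsingleton_neighborSet := (Finset.forall_mem_cons _ _).2 ⟨hM, h.subsingleton_neighborSet⟩
  pairwiseDisjoint := by
    rw [Finset.coe_cons]
    exact h.pairwiseDisjoint.insert fun M' hM' _ ↦ hdisj M' hM'
  support_total := by
    simp only [Finset.forall_mem_cons]
    exact ⟨⟨.inl subset_rfl, fun M' hM' ↦ .inr (hsupp M' hM')⟩,
      fun M' hM' ↦ ⟨.inl (hsupp M' hM'), h.support_total M' hM'⟩⟩

end IsMatchingChain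

section Finite

variable [Finite V]

theorem ncard_edgeSet_deleteIncidenceSet_add (G : SimpleGraph V) (v : V) :
    (G.deleteIncidenceSet v).edgeSet.ncard + (G.neighborSet v).ncard = G.edgeSet.ncard := by
  classical
  have := Fintype.ofFinite V
  have hle := G.degree_le_card_edgeFinset v
  have hcard := G.card_edgeFinset_deleteIncidenceSet v
  simp only [← SimpleGraph.coe_edgeFinset, ← SimpleGraph.coe_neighborFinset, Set.ncard_coe_finset,
    SimpleGraph.card_neighborFinset_eq_degree]
  lia

theorem ncard_support_le_two_mul_ncard_edgeSet (G : SimpleGraph V) :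
    G.support.ncard ≤ 2 * G.edgeSet.ncard := by
  classical
  have := Fintype.ofFinite V
  calc G.support.ncard = ∑ v, if v ∈ G.support then 1 else 0 := by
        simp [Set.ncard_eq_toFinset_card']
    _ ≤ ∑ v, G.degree v := Finset.sum_le_sum fun v _ ↦ by
        split_ifs with hv
        exacts [(G.degree_pos_iff_mem_support v).2 hv, Nat.zero_le _]
    _ = 2 * G.edgeSet.ncard := by
        rw [G.sum_degrees_eq_twice_card_edges, ← SimpleGraph.coe_edgeFinset, Set.ncard_coe_finset]

theorem ncard_neighborSet_le_of_le (h : H ≤ G) (v : V) :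
    (H.neighborSet v).ncard ≤ (G.neighborSet v).ncard :=
  Set.ncard_le_ncard fun _ hw ↦ h hw

theorem exists_le_forall_le_ncard_neighborSet {c : ℝ} (hG : G ≠ ⊥)
    (hc : c * G.support.ncard ≤ G.edgeSet.ncard) :
    ∃ H ≤ G, H ≠ ⊥ ∧ ∀ v ∈ H.support, c ≤ (H.neighborSet v).ncard := by
  induction G using WellFoundedLT.induction with
  | ind G ih =>
  by_cases! hdeg : ∀ v ∈ G.support, c ≤ (G.neighborSet v).ncard
  · exact ⟨G, le_rfl, hG, hdeg⟩
  obtain ⟨v, hv, hvc⟩ := hdeg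
  have hc_pos : 0 < c := (Nat.cast_nonneg _).trans_lt hvc
  set G' := G.deleteIncidenceSet v
  have hedges : (G'.edgeSet.ncard + (G.neighborSet v).ncard : ℝ) = G.edgeSet.ncard := by
    exact_mod_cast ncard_edgeSet_deleteIncidenceSet_add G v
  have hsupport : (G'.support.ncard + 1 : ℝ) ≤ G.support.ncard := by
    rw [← Set.ncard_sdiff_singleton_add_one hv]
    exact_mod_cast Nat.succ_le_succ (Set.ncard_le_ncard (G.support_deleteIncidenceSet_subset v))
  have hG'_lt : c * G'.support.ncard < G'.edgeSet.ncard := by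
    linarith [mul_le_mul_of_nonneg_left hsupport hc_pos.le]
  have hG'_ne : G' ≠ ⊥ := by
    intro hbot
    simp [hbot] at hG'_lt
  have hlt : G' < G := (G.deleteIncidenceSet_le v).lt_of_ne fun heq ↦ by
    rw [show G' = G from heq] at hsupport
    linarith
  obtain ⟨H, hHG', hH, hHdeg⟩ := ih G' hlt hG'_ne hG'_lt.le
  exact ⟨H, hHG'.trans hlt.le, hH, hHdeg⟩

theorem exists_between_compl_ncard_neighborSet_le (G : SimpleGraph V) :
    ∃ S : Set V, ∀ v, (G.neighborSet v).ncard ≤ 2 * ((G.between S Sᶜ).neighborSet v).ncard := by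
  set cut : Set V → SimpleGraph V := fun S ↦ G.between S Sᶜ with hcut
  obtain ⟨S, hS⟩ := Finite.exists_max fun S : Set V ↦ (cut S).edgeSet.ncard
  refine ⟨S, fun v ↦ ?_⟩
  -- Moving `v` across the cut exchanges its cut and uncut edges and affects no other edge.
  let T := symmDiff S {v}
  have hdelete : (cut S).deleteIncidenceSet v = (cut T).deleteIncidenceSet v := by
    ext a b
    simp only [SimpleGraph.deleteIncidenceSet_adj, hcut, SimpleGraph.between_adj, T,
      Set.mem_compl_iff, Set.mem_symmDiff, Set.mem_singleton_iff]
    tauto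
  have hsplit : G.neighborSet v ⊆ (cut S).neighborSet v ∪ (cut T).neighborSet v := by
    intro w hvw
    have hwv : w ≠ v := hvw.ne'
    simp only [SimpleGraph.mem_neighborSet] at hvw
    simp only [Set.mem_union, SimpleGraph.mem_neighborSet, hcut, SimpleGraph.between_adj, T,
      Set.mem_compl_iff, Set.mem_symmDiff, Set.mem_singleton_iff]
    tauto
  have hcard := (Set.ncard_le_ncard hsplit).trans (Set.ncard_union_le _ _)
  have hcutS := ncard_edgeSet_deleteIncidenceSet_add (cut S) v
  have hcutT := ncard_edgeSet_deleteIncidenceSet_add (cut T) v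
  rw [← hdelete] at hcutT
  have hmax := hS T
  lia

theorem exists_subset_support_ncard_neighborhood_le {s t : Set V} (hst : G.IsBipartiteWith s t)
    (hG : G ≠ ⊥) :
    ∃ A ⊆ G.support, A.Nonempty ∧ Disjoint A (neighborhood G A) ∧
      (neighborhood G A).ncard ≤ A.ncard := by
  wlog hle : (G.support ∩ t).ncard ≤ (G.support ∩ s).ncard generalizing s t
  · exact this hst.symm (le_of_not_ge hle)
  obtain ⟨v, w, hvw⟩ := SimpleGraph.ne_bot_iff_exists_adj.1 hG
  have hN : neighborhood G (G.support ∩ s) ⊆ G.support ∩ t := fun w hw ↦ by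
    obtain ⟨a, ha, haw⟩ := mem_neighborhood.1 hw
    exact ⟨haw.right_mem_support, hst.mem_of_mem_adj ha.2 haw⟩
  refine ⟨G.support ∩ s, Set.inter_subset_left, ?_, ?_, (Set.ncard_le_ncard hN).trans hle⟩
  · rcases hst.mem_of_adj hvw with ⟨hv, -⟩ | ⟨-, hw⟩
    exacts [⟨v, hvw.left_mem_support, hv⟩, ⟨w, hvw.right_mem_support, hw⟩]
  · exact hst.disjoint.mono Set.inter_subset_right (hN.trans Set.inter_subset_right)

theorem exists_matching_support_eq_union_neighborhood {A : Set V} (hA : A.Nonempty)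
    (hdisj : Disjoint A (neighborhood G A)) (hcard : (neighborhood G A).ncard ≤ A.ncard)
    (hsupp : A ⊆ G.support) :
    ∃ X ⊆ A, X.Nonempty ∧ (neighborhood G X).ncard = X.ncard ∧
      ∃ M ≤ G, M.support = X ∪ neighborhood G X ∧ ∀ v, (M.neighborSet v).Subsingleton := by
  classical
  have := Fintype.ofFinite V
  have hN (B : Finset V) : (B.biUnion (G.neighborFinset ·) : Set V) = neighborhood G B := by
    simp [neighborhood]
  obtain ⟨X, hXA, hX, e, he⟩ := exists_subset_equiv_biUnion
    (t := (G.neighborFinset ·)) (A := A.toFinset) (by simpa)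
    (fun a ha ↦ by
      rw [← Finset.card_pos]
      exact (G.degree_pos_iff_mem_support a).2 (hsupp (by simpa using ha)))
    (by rwa [← Set.ncard_coe_finset, ← Set.ncard_coe_finset, hN, Set.coe_toFinset])
  replace hXA : (X : Set V) ⊆ A := by simpa using hXA
  have hdisjX : Disjoint (X : Set V) (X.biUnion (G.neighborFinset ·) : Set V) := by
    rw [hN]
    exact hdisj.mono hXA (neighborhood_mono le_rfl hXA)
  obtain ⟨M, hMverts, hM⟩ := SimpleGraph.Subgraph.IsMatching.exists_of_disjoint_sets_of_equiv
    (G := G) hdisjX e fun x ↦ (G.mem_neighborFinset _ _).1 (he x)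
  refine ⟨X, hXA, hX, ?_, M.spanningCoe, M.spanningCoe_le, ?_,
    fun v u hu w hw ↦ hM.eq_of_adj_left hu hw⟩
  · rw [← hN, Set.ncard_coe_finset, Set.ncard_coe_finset]
    simpa only [Fintype.card_coe] using (Fintype.card_congr e).symm
  · rw [← hN, ← hMverts, ← hM.support_eq_verts]
    rfl

theorem ncard_neighborSet_sup_le {𝓜 : Finset (SimpleGraph V)} {v : V}
    (h : ∀ M ∈ 𝓜, (M.neighborSet v).Subsingleton) :
    ((𝓜.sup id).neighborSet v).ncard ≤ 𝓜.card := by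
  have hsup : (𝓜.sup id).neighborSet v = ⋃ M ∈ 𝓜, M.neighborSet v := by
    ext w
    simp [Finset.sup_id_eq_sSup]
  calc ((𝓜.sup id).neighborSet v).ncard
      ≤ ∑ M ∈ 𝓜, (M.neighborSet v).ncard := hsup ▸ Finset.set_ncard_biUnion_le 𝓜 _
    _ ≤ ∑ _ ∈ 𝓜, 1 := Finset.sum_le_sum fun M hM ↦
        Set.ncard_le_one_iff_subsingleton.2 (h M hM)
    _ = 𝓜.card := by simp

theorem ncard_edgeSet_sup_of_pairwiseDisjoint {𝓜 : Finset (SimpleGraph V)}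
    (h : (𝓜 : Set (SimpleGraph V)).PairwiseDisjoint id) :
    (𝓜.sup id).edgeSet.ncard = ∑ M ∈ 𝓜, M.edgeSet.ncard := by
  have hsup : (𝓜.sup id).edgeSet = ⋃ M ∈ (𝓜 : Set (SimpleGraph V)), M.edgeSet := by
    rw [Finset.sup_id_eq_sSup, SimpleGraph.edgeSet_sSup, Set.sUnion_image]
  rw [hsup, 𝓜.finite_toSet.ncard_biUnion (fun _ _ ↦ Set.toFinite _), finsum_mem_coe_finset]
  exact fun M hM M' hM' hne ↦ SimpleGraph.disjoint_edgeSet.2 (h hM hM' hne)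

theorem IsMatchingChain.exists_support_sup_eq {𝓜 : Finset (SimpleGraph V)}
    (h : IsMatchingChain 𝓜) (hne : 𝓜.Nonempty) :
    ∃ M ∈ 𝓜, (𝓜.sup id).support = M.support := by
  obtain ⟨M, hM, hmax⟩ := 𝓜.exists_max_image (fun M ↦ M.support.ncard) hne
  refine ⟨M, hM, subset_antisymm ?_ (SimpleGraph.support_mono (Finset.le_sup (f := id) hM))⟩
  rintro v ⟨w, hvw⟩
  obtain ⟨M', hM', hvw'⟩ : ∃ M' ∈ 𝓜, M'.Adj v w := by
    simpa [Finset.sup_id_eq_sSup] using hvw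
  have hle : M'.support ⊆ M.support := (h.support_total M' hM' M hM).elim id fun hsub ↦
    (Set.eq_of_subset_of_ncard_le hsub (hmax M' hM')).ge
  exact hle hvw'.left_mem_support

theorem exists_isMatchingChain {A : Set V} {k : ℕ} (hA : A.Nonempty)
    (hdisj : Disjoint A (neighborhood G A)) (hcard : (neighborhood G A).ncard ≤ A.ncard)
    (hdeg : ∀ a ∈ A, k ≤ (G.neighborSet a).ncard) :
    ∃ 𝓜, 𝓜.card = k ∧ IsMatchingChain 𝓜 ∧
      ∀ M ∈ 𝓜, M ≤ G ∧ M.support ⊆ A ∪ neighborhood G A := by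
  induction k generalizing G A with
  | zero => exact ⟨∅, rfl, isMatchingChain_empty, by simp⟩
  | succ k ih =>
    have hsupp : A ⊆ G.support := fun a ha ↦
      Set.nonempty_of_ncard_ne_zero (s := G.neighborSet a) (by have := hdeg a ha; lia)
    obtain ⟨X, hXA, hX, hXcard, M, hMG, hMsupp, hM⟩ :=
      exists_matching_support_eq_union_neighborhood hA hdisj hcard hsupp
    have hdelete (B : Set V) : neighborhood (G \ M) B ⊆ neighborhood G B :=
      neighborhood_mono sdiff_le subset_rfl
    have hdegX : ∀ a ∈ X, k ≤ ((G \ M).neighborSet a).ncard := fun a ha ↦ by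
      have hle := Set.ncard_le_ncard_sdiff_add_ncard (G.neighborSet a) (M.neighborSet a)
      have hone := Set.ncard_le_one_iff_subsingleton.2 (hM a)
      have := hdeg a (hXA ha)
      rw [SimpleGraph.neighborSet_sdiff]
      lia
    obtain ⟨𝓜, h𝓜card, h𝓜, h𝓜G⟩ := ih hX
      (hdisj.mono hXA ((hdelete X).trans (neighborhood_mono le_rfl hXA)))
      ((Set.ncard_le_ncard (hdelete X)).trans hXcard.le) hdegX
    have hM_ne : M ≠ ⊥ := by
      rw [Ne, ← SimpleGraph.support_eq_bot_iff, hMsupp]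
      exact hX.inl.ne_empty
    have hM_disj : ∀ M' ∈ 𝓜, Disjoint M M' := fun M' hM' ↦
      disjoint_sdiff_self_right.mono_right (h𝓜G M' hM').1
    have hM_supp : ∀ M' ∈ 𝓜, M'.support ⊆ M.support := fun M' hM' ↦
      (h𝓜G M' hM').2.trans (hMsupp ▸ Set.union_subset_union_right X (hdelete X))
    have hM_notMem : M ∉ 𝓜 := fun hmem ↦ hM_ne (disjoint_self.1 (hM_disj M hmem))
    have hM_le : M.support ⊆ A ∪ neighborhood G A :=
      hMsupp ▸ Set.union_subset_union hXA (neighborhood_mono le_rfl hXA)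
    exact ⟨𝓜.cons M hM_notMem, by simp [h𝓜card], h𝓜.cons hM_notMem hM_ne hM hM_disj hM_supp,
      (Finset.forall_mem_cons _ _).2 ⟨⟨hMG, hM_le⟩, fun M' hM' ↦
        ⟨(h𝓜G M' hM').1.trans sdiff_le, (hM_supp M' hM').trans hM_le⟩⟩⟩

theorem exists_subset_card_eq_log_ncard_support_eq {𝓜 : Finset (SimpleGraph V)} {D : ℕ}
    (hne : ∀ M ∈ 𝓜, M ≠ ⊥) (hD : Nat.log 2 (Nat.card V) * (D - 1) < 𝓜.card) :
    ∃ 𝓝 ⊆ 𝓜, 𝓝.card = D ∧ ∃ y, ∀ M ∈ 𝓝, Nat.log 2 M.support.ncard = y := by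
  have hmaps : ∀ M ∈ 𝓜, Nat.log 2 M.support.ncard ∈ Finset.Icc 1 (Nat.log 2 (Nat.card V)) := by
    intro M hM
    obtain ⟨v, w, hvw⟩ := SimpleGraph.ne_bot_iff_exists_adj.1 (hne M hM)
    have htwo : 2 ≤ M.support.ncard := (Set.one_lt_ncard_iff).2
      ⟨v, w, hvw.left_mem_support, hvw.right_mem_support, hvw.ne⟩
    exact Finset.mem_Icc.2 ⟨Nat.log_pos one_lt_two htwo, Nat.log_mono_right (Set.ncard_le_card _)⟩
  obtain ⟨y, -, hy⟩ := Finset.exists_lt_card_fiber_of_mul_lt_card_of_maps_to hmaps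
    (by simpa using hD)
  obtain ⟨𝓝, h𝓝, h𝓝card⟩ := Finset.exists_subset_card_eq (Nat.le_of_pred_lt hy)
  exact ⟨𝓝, h𝓝.trans (Finset.filter_subset _ _), h𝓝card, y,
    fun M hM ↦ (Finset.mem_filter.1 (h𝓝 hM)).2⟩

theorem IsMatchingChain.card_mul_ncard_support_sup_le {𝓜 : Finset (SimpleGraph V)} {y : ℕ}
    (h : IsMatchingChain 𝓜) (hne : 𝓜.Nonempty)
    (hlog : ∀ M ∈ 𝓜, Nat.log 2 M.support.ncard = y) :
    𝓜.card * (𝓜.sup id).support.ncard ≤ 4 * (𝓜.sup id).edgeSet.ncard := by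
  obtain ⟨M₀, hM₀, hsupp⟩ := h.exists_support_sup_eq hne
  have hterm : ∀ M ∈ 𝓜, M₀.support.ncard ≤ 4 * M.edgeSet.ncard := fun M hM ↦ by
    have hM_ne : M.support.ncard ≠ 0 := by
      rw [Ne, Set.ncard_eq_zero, SimpleGraph.support_eq_bot_iff]
      exact h.ne_bot M hM
    have hlt := lt_two_mul_of_log_two_eq hM_ne ((hlog M₀ hM₀).trans (hlog M hM).symm)
    have := ncard_support_le_two_mul_ncard_edgeSet M
    lia
  calc 𝓜.card * (𝓜.sup id).support.ncard = ∑ _ ∈ 𝓜, M₀.support.ncard := by simp [hsupp]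
    _ ≤ ∑ M ∈ 𝓜, 4 * M.edgeSet.ncard := Finset.sum_le_sum hterm
    _ = 4 * (𝓜.sup id).edgeSet.ncard := by
      rw [← Finset.mul_sum, ncard_edgeSet_sup_of_pairwiseDisjoint h.pairwiseDisjoint]

theorem IsMatchingChain.exists_le_sup_ncard_neighborSet_mem_Icc {𝓜 : Finset (SimpleGraph V)}
    {y : ℕ} (h : IsMatchingChain 𝓜) (hne : 𝓜.Nonempty)
    (hlog : ∀ M ∈ 𝓜, Nat.log 2 M.support.ncard = y) :
    ∃ H ≤ 𝓜.sup id, H ≠ ⊥ ∧ ∀ v ∈ H.support,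
      ((H.neighborSet v).ncard : ℝ) ∈ Set.Icc (𝓜.card / 4 : ℝ) 𝓜.card := by
  obtain ⟨M, hM⟩ := hne
  have hsup_ne : 𝓜.sup id ≠ ⊥ := ne_bot_of_le_ne_bot (h.ne_bot M hM) (Finset.le_sup (f := id) hM)
  have hdense : (𝓜.card / 4 * (𝓜.sup id).support.ncard : ℝ) ≤ (𝓜.sup id).edgeSet.ncard := by
    have : (𝓜.card * (𝓜.sup id).support.ncard : ℝ) ≤ 4 * (𝓜.sup id).edgeSet.ncard := by
      exact_mod_cast h.card_mul_ncard_support_sup_le ⟨M, hM⟩ hlog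
    linarith
  obtain ⟨H, hH, hH_ne, hdeg⟩ := exists_le_forall_le_ncard_neighborSet hsup_ne hdense
  exact ⟨H, hH, hH_ne, fun v hv ↦ ⟨hdeg v hv, by
    exact_mod_cast (ncard_neighborSet_le_of_le hH v).trans
      (ncard_neighborSet_sup_le fun M hM ↦ h.subsingleton_neighborSet M hM v)⟩⟩

theorem exists_le_isBipartiteWith_forall_le_ncard_neighborSet {d : ℝ} (hG : G ≠ ⊥)
    (hd : d * Nat.card V ≤ 2 * G.edgeSet.ncard) (hd_pos : 0 < d) :
    ∃ H ≤ G, H ≠ ⊥ ∧ (∃ s t, H.IsBipartiteWith s t) ∧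
      ∀ v ∈ H.support, d / 4 ≤ (H.neighborSet v).ncard := by
  have hdense : d / 2 * G.support.ncard ≤ G.edgeSet.ncard := by
    have : (G.support.ncard : ℝ) ≤ Nat.card V := by exact_mod_cast Set.ncard_le_card G.support
    nlinarith
  obtain ⟨G', hG'G, hG'_ne, hG'⟩ := exists_le_forall_le_ncard_neighborSet hG hdense
  obtain ⟨S, hS⟩ := exists_between_compl_ncard_neighborSet_le G'
  have hdeg : ∀ v ∈ G'.support, d / 4 ≤ ((G'.between S Sᶜ).neighborSet v).ncard := fun v hv ↦ by
    have hdouble : ((G'.neighborSet v).ncard : ℝ) ≤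
      2 * ((G'.between S Sᶜ).neighborSet v).ncard := by exact_mod_cast hS v
    linarith [hG' v hv]
  refine ⟨G'.between S Sᶜ, SimpleGraph.between_le.trans hG'G, ?_,
    ⟨S, Sᶜ, SimpleGraph.between_isBipartiteWith disjoint_compl_right⟩,
    fun v hv ↦ hdeg v (SimpleGraph.support_mono SimpleGraph.between_le hv)⟩
  obtain ⟨v, w, hvw⟩ := SimpleGraph.ne_bot_iff_exists_adj.1 hG'_ne
  intro hbot
  have hd_le : d / 4 ≤ 0 := by simpa [hbot] using hdeg v hvw.left_mem_support
  linarith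

theorem exists_le_forall_ncard_neighborSet_mem_Icc [Nonempty V] {d : ℝ} {D : ℕ}
    (hd : d * Nat.card V ≤ 2 * G.edgeSet.ncard) (hD_pos : 0 < D)
    (hD : (Nat.log 2 (Nat.card V) * (D - 1 : ℕ) : ℝ) < d / 4) :
    ∃ H ≤ G, H ≠ ⊥ ∧ ∀ v ∈ H.support,
      ((H.neighborSet v).ncard : ℝ) ∈ Set.Icc (D / 4 : ℝ) D := by
  have hd_pos : 0 < d := by
    have : (0 : ℝ) ≤ Nat.log 2 (Nat.card V) * (D - 1 : ℕ) := by positivity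
    linarith
  have hG : G ≠ ⊥ := by
    rintro rfl
    have hpos : 0 < d * Nat.card V := mul_pos hd_pos (Nat.cast_pos.2 Nat.card_pos)
    exact hpos.not_ge (by simpa using hd)
  obtain ⟨B, hBG, hB_ne, ⟨s, t, hst⟩, hBdeg⟩ :=
    exists_le_isBipartiteWith_forall_le_ncard_neighborSet hG hd hd_pos
  obtain ⟨A, hAB, hA, hdisj, hcard⟩ := exists_subset_support_ncard_neighborhood_le hst hB_ne
  obtain ⟨𝓜, h𝓜card, h𝓜, h𝓜B⟩ := exists_isMatchingChain (k := ⌈d / 4⌉₊) hA hdisj hcard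
    fun a ha ↦ Nat.ceil_le.2 (hBdeg a (hAB ha))
  obtain ⟨𝓝, h𝓝𝓜, rfl, y, hlog⟩ := exists_subset_card_eq_log_ncard_support_eq (D := D) h𝓜.ne_bot
    (by rw [h𝓜card, Nat.lt_ceil]; exact_mod_cast hD)
  obtain ⟨H, hH, hH_ne, hHdeg⟩ := (h𝓜.subset h𝓝𝓜).exists_le_sup_ncard_neighborSet_mem_Icc
    (Finset.card_pos.1 hD_pos) hlog
  have hsup_le : 𝓝.sup id ≤ B := Finset.sup_le fun M hM ↦ (h𝓜B M (h𝓝𝓜 hM)).1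
  exact ⟨H, (hH.trans hsup_le).trans hBG, hH_ne, hHdeg⟩

end Finite

/-- Lemma 2.1, the regularisation lemma.  Let `G` be a graph with
`n ≥ 2` vertices and average degree `d`.  Then `G` has a (possibly non-induced, nonempty)
subgraph all of whose degrees lie in the interval `[d', 6d']`, where
`d' = (⌊(d/4 − 1)/⌈log₂ n⌉⌋ + 1)/6`. -/
theorem stmt3 {V : Type} [Fintype V] (G : SimpleGraph V) (n : ℕ)
    (hn : n = Fintype.card V) (h2 : 2 ≤ n) (d d' : ℝ)
    (hd : d = 2 * (G.edgeSet.ncard : ℝ) / (n : ℝ))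
    (hd' : d' = ((⌊(d / 4 - 1) / ((⌈Real.logb 2 (n : ℝ)⌉ : ℤ) : ℝ)⌋ : ℤ) + 1) / 6) :
    ∃ H : G.Subgraph, H.verts.Nonempty ∧
      ∀ v ∈ H.verts,
        d' ≤ ((H.neighborSet v).ncard : ℝ) ∧ ((H.neighborSet v).ncard : ℝ) ≤ 6 * d' := by
  have : Nonempty V := Fintype.card_pos_iff.1 (by lia)
  have hlog : (Nat.log 2 n : ℝ) ≤ (⌈Real.logb 2 n⌉ : ℤ) :=
    (Real.natLog_le_logb n 2).trans (Int.le_ceil _)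
  obtain ⟨D, hD, hD_lt⟩ := exists_nat_eq_floor_sub_one_div_add_one (x := d / 4)
    (by rw [hd]; positivity) (Nat.log_pos one_lt_two h2) hlog
  rw [hD] at hd'
  rcases D.eq_zero_or_pos with rfl | hD_pos
  · obtain ⟨v⟩ := ‹Nonempty V›
    exact ⟨G.singletonSubgraph v, ⟨v, rfl⟩, fun w _ ↦ by simp [hd']⟩
  · have hsum : d * Nat.card V ≤ 2 * G.edgeSet.ncard := by
      rw [hd, Nat.card_eq_fintype_card, ← hn, div_mul_cancel₀ _ (by positivity)]
    obtain ⟨H, hHG, hH_ne, hHdeg⟩ := exists_le_forall_ncard_neighborSet_mem_Icc hsum hD_pos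
      (by simpa [Nat.card_eq_fintype_card, ← hn] using hD_lt hD_pos)
    obtain ⟨v, w, hvw⟩ := SimpleGraph.ne_bot_iff_exists_adj.1 hH_ne
    refine ⟨supportSubgraph hHG, ⟨v, hvw.left_mem_support⟩, fun v hv ↦ ?_⟩
    obtain ⟨hlower, hupper⟩ := hHdeg v hv
    rw [neighborSet_supportSubgraph]
    constructor <;> linarith
end

section
/- Let G be an ordered graph, U ⊆ V(G), and xy ∈ E(G) an edge with h(xy,G) > 4m+3 for some real number m satisfying m ≥ |U| and m²/2 > Δ(G)·|U|. Then there exist vertices z, w ∈ V(G) \ U such that xyzw is an increasing path (its three edges xy, yz, zw form a strictly increasing sequence in the edge order and x, y, z, w are distinct) and h(zw, G−U) ≥ h(xy,G) − 4m − 3, where G−U is the induced ordered subgraph of G on V(G) \ U. -/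
open scoped Classical

namespace EO

/-- Auxiliary choice function for building the height table: given the list `prev` of the
(optional) entries at all earlier scanning positions, `htPick N G w k prev` is the entry at
scanning position `k`, namely the `w`-largest edge of `G` containing the column vertex
`⟨k % N⟩` of position `k` that does not occur among the earlier entries, if any exists. -/
noncomputable def htPick (N : ℕ) (G : SimpleGraph (Fin N)) (w : Sym2 (Fin N) → ℕ)
    (k : ℕ) (prev : List (Option (Sym2 (Fin N)))) : Option (Sym2 (Fin N)) :=
  if hN : 0 < N then
    if h : ∃ e, (e ∈ G.edgeSet ∧ (⟨k % N, Nat.mod_lt k hN⟩ : Fin N) ∈ e ∧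
          some e ∉ prev) ∧
        ∀ f, (f ∈ G.edgeSet ∧ (⟨k % N, Nat.mod_lt k hN⟩ : Fin N) ∈ f ∧
          some f ∉ prev) → w f ≤ w e
    then some h.choose else none
  else none

/-- The list of the first `k` entries of the height table of the ordered graph `G`
(vertex set `Fin N` with its natural vertex order, edge order given by the injective
weight `w`).  Scanning position `k` corresponds to row `k / N + 1` and column `⟨k % N⟩`,
so scanning positions in increasing order of `k` is exactly scanning the table in
increasing lexicographic order (row first, then vertex order within a row). -/
noncomputable def htList (N : ℕ) (G : SimpleGraph (Fin N)) (w : Sym2 (Fin N) → ℕ) :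
    ℕ → List (Option (Sym2 (Fin N)))
  | 0 => []
  | k + 1 => htList N G w k ++ [htPick N G w k (htList N G w k)]

/-- The entry of the height table of `G` at scanning position `k`: the `w`-largest
not-yet-entered edge containing the column vertex of position `k`, if any. -/
noncomputable def htEntry (N : ℕ) (G : SimpleGraph (Fin N)) (w : Sym2 (Fin N) → ℕ)
    (k : ℕ) : Option (Sym2 (Fin N)) :=
  htPick N G w k (htList N G w k)

/-- The scanning index at which the edge `e` is entered into the height table
(junk value `0` if `e` is never entered; every edge of `G` is in fact entered exactly
once).  The lexicographic order on table positions corresponds exactly to the order of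
scanning indices. -/
noncomputable def htIndex (N : ℕ) (G : SimpleGraph (Fin N)) (w : Sym2 (Fin N) → ℕ)
    (e : Sym2 (Fin N)) : ℕ :=
  if h : ∃ k, htEntry N G w k = some e then Nat.find h else 0

/-- The height (row, `1`-indexed) of the edge `e` in the height table of `G`. -/
noncomputable def height (N : ℕ) (G : SimpleGraph (Fin N)) (w : Sym2 (Fin N) → ℕ)
    (e : Sym2 (Fin N)) : ℕ :=
  htIndex N G w e / N + 1

/-- The index of the column (vertex) of the edge `e` in the height table of `G`. -/
noncomputable def col (N : ℕ) (G : SimpleGraph (Fin N)) (w : Sym2 (Fin N) → ℕ)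
    (e : Sym2 (Fin N)) : ℕ :=
  htIndex N G w e % N

/-- The column vertex of the edge `e` in the height table of `G` (for `N > 0`). -/
noncomputable def colV (N : ℕ) (hN : 0 < N) (G : SimpleGraph (Fin N))
    (w : Sym2 (Fin N) → ℕ) (e : Sym2 (Fin N)) : Fin N :=
  ⟨htIndex N G w e % N, Nat.mod_lt _ hN⟩

/-- A list of edges is increasing (with respect to the edge order given by `w`) if
consecutive entries are strictly increasing. -/
def Increasing {V : Type*} (w : Sym2 V → ℕ) (l : List (Sym2 V)) : Prop :=
  l.Chain' fun a b => w a < w b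

end EO

/-!
Deleting edges can only move the surviving edges to earlier positions of the height table, and a
position occupied in the table of a subgraph is occupied in the table of the whole graph. Hence
the number of edges lying below row `a` after a deletion but not before it is at most the number
of deleted edges.

As long as `xy` is not yet placed, column `y` receives edges `yz` larger than `xy`; those in
the `|U| + k` rows just below `xy` provide `k` choices of `z ∉ U`. For each of them, the next
`|U| + k + 1` rows of column `z` provide `k` choices of `v ∉ U ∪ {x}` with `zv` larger than `yz`.
The column tells the two ends of `zv` apart, so these are `k ^ 2` different edges of `G - U`; as
fewer than `k ^ 2` edges were deleted, one of them does not fall below all these rows in `G - U`.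
-/

namespace EO

variable {N : ℕ} {G G' : SimpleGraph (Fin N)} {w : Sym2 (Fin N) → ℕ} {e f : Sym2 (Fin N)}
  {a b j k r : ℕ} {v : Fin N}

theorem mem_htList {o : Option (Sym2 (Fin N))} :
    o ∈ htList N G w k ↔ ∃ j < k, htEntry N G w j = o := by
  induction k with
  | zero => simp [htList]
  | succ k ih =>
    rw [htList, List.mem_append, ih, List.mem_singleton, Nat.exists_lt_succ_right, htEntry,
      eq_comm (a := o)]

/-- `Candidate N G w k e` says that the edge `e` competes for scanning position `k`: it contains
the column vertex of position `k` and has not been entered before. Quantifying over the column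
vertex avoids a proof of `0 < N`. -/
def Candidate (N : ℕ) (G : SimpleGraph (Fin N)) (w : Sym2 (Fin N) → ℕ) (k : ℕ)
    (e : Sym2 (Fin N)) : Prop :=
  e ∈ G.edgeSet ∧ (∃ v ∈ e, k % N = (v : ℕ)) ∧ ∀ j < k, htEntry N G w j ≠ some e

theorem candidate_iff (hN : 0 < N) :
    Candidate N G w k e ↔
      e ∈ G.edgeSet ∧ (⟨k % N, Nat.mod_lt k hN⟩ : Fin N) ∈ e ∧ some e ∉ htList N G w k := by
  have mem_iff : (∃ v ∈ e, k % N = (v : ℕ)) ↔ (⟨k % N, Nat.mod_lt k hN⟩ : Fin N) ∈ e :=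
    ⟨fun ⟨v, hve, hv⟩ => by simpa only [hv] using hve, fun h => ⟨_, h, rfl⟩⟩
  simp only [Candidate, mem_iff, mem_htList, not_exists, not_and, ne_eq]

theorem candidate_and_wt_le_of_htEntry_eq_some (h : htEntry N G w k = some e) :
    Candidate N G w k e ∧ ∀ f, Candidate N G w k f → w f ≤ w e := by
  unfold htEntry htPick at h
  split_ifs at h with hN hmax
  simp only [candidate_iff hN]
  exact Option.some_injective _ h ▸ hmax.choose_spec

theorem exists_htEntry_eq_some_of_candidate (h : Candidate N G w k e) :
    ∃ f, htEntry N G w k = some f := by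
  have hN : 0 < N := h.2.1.choose.pos
  obtain ⟨f, hf, hmax⟩ := Finset.exists_max_image (Finset.univ.filter (Candidate N G w k)) w
    ⟨e, by simpa using h⟩
  simp only [Finset.mem_filter, Finset.mem_univ, true_and, candidate_iff hN] at hf hmax
  unfold htEntry htPick
  rw [dif_pos hN, dif_pos ⟨f, hf, hmax⟩]
  exact ⟨_, rfl⟩

theorem eq_of_htEntry_eq_some (hj : htEntry N G w j = some e) (hk : htEntry N G w k = some e) :
    j = k := by
  have le_of_entries {i l : ℕ} (hi : htEntry N G w i = some e) (hl : htEntry N G w l = some e) :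
      l ≤ i :=
    not_lt.mp fun hil => (candidate_and_wt_le_of_htEntry_eq_some hl).1.2.2 i hil hi
  exact le_antisymm (le_of_entries hk hj) (le_of_entries hj hk)

-- Otherwise every row would hold a different edge in a column of an endpoint of `e`.
theorem exists_htEntry_eq_some (he : e ∈ G.edgeSet) : ∃ k, htEntry N G w k = some e := by
  by_contra! hnever
  have hve : e.out.1 ∈ e := e.out_fst_mem
  have hentry (r : ℕ) : ∃ f, htEntry N G w (r * N + e.out.1) = some f :=
    exists_htEntry_eq_some_of_candidate
      ⟨he, ⟨_, hve, Nat.mul_add_mod_of_lt e.out.1.isLt⟩, fun j _ => hnever j⟩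
  choose F hF using hentry
  refine not_injective_infinite_finite F fun r s hrs => ?_
  have hpos := Nat.add_right_cancel (eq_of_htEntry_eq_some (hF r) (hrs ▸ hF s))
  exact Nat.eq_of_mul_eq_mul_right e.out.1.pos hpos

theorem htEntry_eq_some_iff : htEntry N G w k = some e ↔ e ∈ G.edgeSet ∧ htIndex N G w e = k := by
  have htEntry_htIndex (h : ∃ k, htEntry N G w k = some e) :
      htEntry N G w (htIndex N G w e) = some e := by
    rw [htIndex, dif_pos h]
    exact Nat.find_spec h
  constructor
  · intro h
    exact ⟨(candidate_and_wt_le_of_htEntry_eq_some h).1.1,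
      eq_of_htEntry_eq_some (htEntry_htIndex ⟨k, h⟩) h⟩
  · rintro ⟨he, rfl⟩
    exact htEntry_htIndex (exists_htEntry_eq_some he)

theorem candidate_of_le_htIndex (he : e ∈ G.edgeSet) (hve : v ∈ e) (hv : k % N = v)
    (hk : k ≤ htIndex N G w e) : Candidate N G w k e := by
  refine ⟨he, ⟨v, hve, hv⟩, fun j hj h => ?_⟩
  have := (htEntry_eq_some_iff.mp h).2
  omega

theorem htIndex_injOn : Set.InjOn (htIndex N G w) G.edgeSet := fun _ he _ hf hef =>
  Option.some_injective _ <|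
    (htEntry_eq_some_iff.mpr ⟨he, hef⟩).symm.trans (htEntry_eq_some_iff.mpr ⟨hf, rfl⟩)

theorem exists_mem_col_eq (he : e ∈ G.edgeSet) : ∃ v ∈ e, col N G w e = (v : ℕ) :=
  (candidate_and_wt_le_of_htEntry_eq_some (htEntry_eq_some_iff.mpr ⟨he, rfl⟩)).1.2.1

theorem mem_of_col_eq (he : e ∈ G.edgeSet) (hv : col N G w e = v) : v ∈ e := by
  obtain ⟨u, hue, hu⟩ := exists_mem_col_eq (w := w) he
  rwa [Fin.ext (hv.symm.trans hu)]

theorem exists_htIndex_eq (he : e ∈ G.edgeSet) (hve : v ∈ e) (hv : k % N = v)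
    (hk : k ≤ htIndex N G w e) : ∃ f ∈ G.edgeSet, htIndex N G w f = k := by
  obtain ⟨f, hf⟩ := exists_htEntry_eq_some_of_candidate (candidate_of_le_htIndex he hve hv hk)
  exact ⟨f, htEntry_eq_some_iff.mp hf⟩

theorem wt_lt_of_htIndex_lt (hw : Function.Injective w) (he : e ∈ G.edgeSet)
    (hf : f ∈ G.edgeSet) (hve : v ∈ e) (hv : col N G w f = v)
    (hlt : htIndex N G w f < htIndex N G w e) : w e < w f := by
  have hle : w e ≤ w f := (candidate_and_wt_le_of_htEntry_eq_some
    (htEntry_eq_some_iff.mpr ⟨hf, rfl⟩)).2 e (candidate_of_le_htIndex he hve hv hlt.le)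
  have hne : e ≠ f := by
    rintro rfl
    exact hlt.false
  exact hle.lt_of_ne (hw.ne hne)

theorem htIndex_le_of_le (hw : Function.Injective w) (hle : G' ≤ G) (he : e ∈ G'.edgeSet) :
    htIndex N G' w e ≤ htIndex N G w e := by
  induction hk : htIndex N G w e using Nat.strong_induction_on generalizing e with
  | _ k ih =>
    subst hk
    by_contra! hlt
    have heG := SimpleGraph.edgeSet_mono hle he
    obtain ⟨v, hve, hv⟩ := exists_mem_col_eq (w := w) heG
    obtain ⟨f, hf, hfk⟩ := exists_htIndex_eq he hve hv hlt.le
    have hfG := SimpleGraph.edgeSet_mono hle hf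
    have hfv : col N G' w f = v := by rw [col, hfk, ← hv, col]
    have hef : w e < w f := wt_lt_of_htIndex_lt hw he hf hve hfv (hfk ▸ hlt)
    rcases lt_trichotomy (htIndex N G w f) (htIndex N G w e) with h | h | h
    · exact (ih _ h hf rfl).not_gt (hfk ▸ h)
    · exact hef.ne (congrArg w (htIndex_injOn hfG heG h).symm)
    · exact hef.asymm (wt_lt_of_htIndex_lt hw hfG heG (mem_of_col_eq hf hfv) hv h)

theorem exists_htIndex_eq_of_le (hw : Function.Injective w) (hle : G' ≤ G)
    (he : e ∈ G'.edgeSet) : ∃ f ∈ G.edgeSet, htIndex N G w f = htIndex N G' w e := by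
  obtain ⟨v, hve, hv⟩ := exists_mem_col_eq (w := w) he
  exact exists_htIndex_eq (SimpleGraph.edgeSet_mono hle he) hve hv (htIndex_le_of_le hw hle he)

/-- The edges of `G` placed in the height table in a row before row `a`. -/
noncomputable def edgesBelow (N : ℕ) (G : SimpleGraph (Fin N)) (w : Sym2 (Fin N) → ℕ) (a : ℕ) :
    Finset (Sym2 (Fin N)) :=
  {e | e ∈ G.edgeSet ∧ height N G w e < a}

theorem mem_edgesBelow : e ∈ edgesBelow N G w a ↔ e ∈ G.edgeSet ∧ height N G w e < a := by
  simp [edgesBelow]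

theorem card_edgesBelow_le (hw : Function.Injective w) (hle : G' ≤ G) (a : ℕ) :
    (edgesBelow N G' w a).card ≤ (edgesBelow N G w a).card := by
  have hinj : Set.InjOn (htIndex N G' w) (edgesBelow N G' w a) :=
    htIndex_injOn.mono fun e he => (mem_edgesBelow.mp he).1
  rw [← Finset.card_image_of_injOn hinj]
  refine (Finset.card_le_card fun k hk => ?_).trans
    (Finset.card_image_le (s := edgesBelow N G w a) (f := htIndex N G w))
  obtain ⟨e, he, rfl⟩ := Finset.mem_image.mp hk
  obtain ⟨he, hea⟩ := mem_edgesBelow.mp he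
  obtain ⟨f, hf, hfe⟩ := exists_htIndex_eq_of_le hw hle he
  have hfa : height N G w f < a := by rwa [height, hfe]
  exact Finset.mem_image.mpr ⟨f, mem_edgesBelow.mpr ⟨hf, hfa⟩, hfe⟩

theorem card_edgesBelow_sdiff_le (hw : Function.Injective w) (hle : G' ≤ G) (a : ℕ) :
    (edgesBelow N G' w a \ edgesBelow N G w a).card ≤ (G.edgeSet \ G'.edgeSet).ncard := by
  have hsub : (↑(edgesBelow N G w a \ edgesBelow N G' w a) : Set (Sym2 (Fin N))) ⊆
      G.edgeSet \ G'.edgeSet := by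
    intro e he
    obtain ⟨hmem, hnotMem⟩ := Finset.mem_sdiff.mp he
    obtain ⟨heG, hea⟩ := mem_edgesBelow.mp hmem
    refine ⟨heG, fun heG' => hnotMem (mem_edgesBelow.mpr ⟨heG', lt_of_le_of_lt ?_ hea⟩)⟩
    exact Nat.add_le_add_right (Nat.div_le_div_right (htIndex_le_of_le hw hle heG')) 1
  calc (edgesBelow N G' w a \ edgesBelow N G w a).card
      ≤ (edgesBelow N G w a \ edgesBelow N G' w a).card :=
        Finset.card_sdiff_le_card_sdiff_iff.mpr (card_edgesBelow_le hw hle a)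
    _ = (↑(edgesBelow N G w a \ edgesBelow N G' w a) : Set (Sym2 (Fin N))).ncard :=
        (Set.ncard_coe_finset _).symm
    _ ≤ (G.edgeSet \ G'.edgeSet).ncard := Set.ncard_le_ncard hsub

theorem exists_le_height_of_ncard_lt (hw : Function.Injective w) (hle : G' ≤ G)
    {S : Finset (Sym2 (Fin N))} (hS : ∀ e ∈ S, e ∈ G'.edgeSet ∧ a ≤ height N G w e)
    (hcard : (G.edgeSet \ G'.edgeSet).ncard < S.card) : ∃ e ∈ S, a ≤ height N G' w e := by
  by_contra! hlt
  have hsub : S ⊆ edgesBelow N G' w a \ edgesBelow N G w a := fun e he =>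
    Finset.mem_sdiff.mpr ⟨mem_edgesBelow.mpr ⟨(hS e he).1, hlt e he⟩,
      fun h => (mem_edgesBelow.mp h).2.not_ge (hS e he).2⟩
  exact hcard.not_ge ((Finset.card_le_card hsub).trans (card_edgesBelow_sdiff_le hw hle a))

theorem ncard_edgeSet_inter_incident_le {V : Type*} [Fintype V] (G : SimpleGraph V)
    [DecidableRel G.Adj] (U : Finset V) :
    (G.edgeSet ∩ {e | ∃ u ∈ U, u ∈ e}).ncard ≤ G.maxDegree * U.card := by
  have hsub : G.edgeSet ∩ {e | ∃ u ∈ U, u ∈ e} ⊆ ↑(U.biUnion fun u => G.incidenceFinset u) := by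
    rintro e ⟨he, u, hu, hue⟩
    exact Finset.mem_biUnion.mpr ⟨u, hu, (G.mem_incidenceFinset u e).mpr ⟨he, hue⟩⟩
  calc (G.edgeSet ∩ {e | ∃ u ∈ U, u ∈ e}).ncard
      ≤ (U.biUnion fun u => G.incidenceFinset u).card := by
        rw [← Set.ncard_coe_finset]
        exact Set.ncard_le_ncard hsub
    _ ≤ U.card * G.maxDegree := Finset.card_biUnion_le_card_mul _ _ _ fun u _ => by
        rw [SimpleGraph.card_incidenceFinset_eq_degree]
        exact G.degree_le_maxDegree u
    _ = G.maxDegree * U.card := mul_comm _ _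

/-- The neighbors `z` of `v` such that the edge `vz` is placed in column `v` of the height table,
in one of the rows `a, …, b - 1`. -/
noncomputable def columnNeighbors (N : ℕ) (G : SimpleGraph (Fin N)) (w : Sym2 (Fin N) → ℕ)
    (v : Fin N) (a b : ℕ) : Finset (Fin N) :=
  {z | G.Adj v z ∧ col N G w s(v, z) = v ∧ height N G w s(v, z) ∈ Finset.Ico a b}

theorem mem_columnNeighbors {z : Fin N} :
    z ∈ columnNeighbors N G w v a b ↔ G.Adj v z ∧ col N G w s(v, z) = v ∧
      a ≤ height N G w s(v, z) ∧ height N G w s(v, z) < b := by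
  simp [columnNeighbors]

theorem exists_adj_col_eq_height_eq (he : e ∈ G.edgeSet) (hve : v ∈ e)
    (hr : r + 1 < height N G w e) :
    ∃ z, G.Adj v z ∧ col N G w s(v, z) = v ∧ height N G w s(v, z) = r + 1 := by
  have hle : r * N + v ≤ htIndex N G w e := calc
    r * N + v ≤ (r + 1) * N := by rw [Nat.succ_mul]; omega
    _ ≤ htIndex N G w e / N * N := Nat.mul_le_mul_right N (Nat.le_of_lt_succ hr)
    _ ≤ htIndex N G w e := Nat.div_mul_le_self _ _
  obtain ⟨f, hf, hfr⟩ := exists_htIndex_eq he hve (Nat.mul_add_mod_of_lt v.isLt) hle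
  have hcol : col N G w f = v := by rw [col, hfr, Nat.mul_add_mod_of_lt v.isLt]
  have hheight : height N G w f = r + 1 := by
    rw [height, hfr, mul_comm, Nat.mul_add_div v.pos, Nat.div_eq_of_lt v.isLt, add_zero]
  obtain ⟨z, rfl⟩ := Sym2.mem_iff_exists.mp (mem_of_col_eq hf hcol)
  exact ⟨z, hf, hcol, hheight⟩

theorem le_card_columnNeighbors (he : e ∈ G.edgeSet) (hve : v ∈ e) (ha : 0 < a)
    (hb : b ≤ height N G w e) : b - a ≤ (columnNeighbors N G w v a b).card := by
  have hsub : Finset.Ico a b ⊆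
      (columnNeighbors N G w v a b).image fun z => height N G w s(v, z) := by
    intro r hr
    obtain ⟨har, hrb⟩ := Finset.mem_Ico.mp hr
    obtain ⟨q, rfl⟩ := Nat.exists_eq_succ_of_ne_zero (ha.trans_le har).ne'
    obtain ⟨z, hadj, hcol, hheight⟩ := exists_adj_col_eq_height_eq he hve (hrb.trans_le hb)
    refine Finset.mem_image.mpr ⟨z, mem_columnNeighbors.mpr ⟨hadj, hcol, ?_⟩, hheight⟩
    exact hheight ▸ ⟨har, hrb⟩
  calc b - a = (Finset.Ico a b).card := (Nat.card_Ico a b).symm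
    _ ≤ _ := Finset.card_le_card hsub
    _ ≤ _ := Finset.card_image_le

theorem wt_lt_of_mem_columnNeighbors (hw : Function.Injective w) (he : e ∈ G.edgeSet)
    (hve : v ∈ e) (hb : b ≤ height N G w e) {z : Fin N}
    (hz : z ∈ columnNeighbors N G w v a b) : w e < w s(v, z) := by
  obtain ⟨hadj, hcol, -, hlt⟩ := mem_columnNeighbors.mp hz
  refine wt_lt_of_htIndex_lt hw he hadj hve hcol (lt_of_not_ge fun hge => ?_)
  exact (hlt.trans_le hb).not_ge (Nat.add_le_add_right (Nat.div_le_div_right hge) 1)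

/-- The pairs `(z, v)` used to extend `xy` to an increasing path `xyzv` avoiding `U`: the edge `yz`
lies in column `y`, from row `b` up to the row of `xy`, and the edge `zv` lies in column `z`, in
the rows `a, …, b - 1`. -/
noncomputable def pathEnds (N : ℕ) (G : SimpleGraph (Fin N)) (w : Sym2 (Fin N) → ℕ)
    (U : Finset (Fin N)) (x y : Fin N) (a b : ℕ) : Finset (Σ _ : Fin N, Fin N) :=
  (columnNeighbors N G w y b (height N G w s(x, y)) \ U).sigma
    fun z => columnNeighbors N G w z a b \ insert x U

variable {U : Finset (Fin N)} {x y : Fin N} {p : Σ _ : Fin N, Fin N}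

theorem mem_pathEnds :
    p ∈ pathEnds N G w U x y a b ↔
      (p.1 ∈ columnNeighbors N G w y b (height N G w s(x, y)) ∧ p.1 ∉ U) ∧
        p.2 ∈ columnNeighbors N G w p.1 a b ∧ p.2 ≠ x ∧ p.2 ∉ U := by
  simp [pathEnds]

theorem wt_lt_wt_lt_of_mem_pathEnds (hw : Function.Injective w) (hxy : G.Adj x y)
    (hp : p ∈ pathEnds N G w U x y a b) :
    w s(x, y) < w s(y, p.1) ∧ w s(y, p.1) < w s(p.1, p.2) := by
  obtain ⟨⟨hz, -⟩, hv, -⟩ := mem_pathEnds.mp hp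
  obtain ⟨hyz, -, hbz, -⟩ := mem_columnNeighbors.mp hz
  exact ⟨wt_lt_of_mem_columnNeighbors hw hxy (Sym2.mem_mk_right x y) le_rfl hz,
    wt_lt_of_mem_columnNeighbors hw hyz (Sym2.mem_mk_right y p.1) hbz hv⟩

theorem injOn_edge_pathEnds :
    Set.InjOn (fun p : Σ _ : Fin N, Fin N => s(p.1, p.2)) (pathEnds N G w U x y a b) := by
  rintro ⟨z, v⟩ hp ⟨z', v'⟩ hp' (heq : s(z, v) = s(z', v'))
  have hcol : col N G w s(z, v) = z := (mem_columnNeighbors.mp (mem_pathEnds.mp hp).2.1).2.1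
  have hcol' : col N G w s(z', v') = z' := (mem_columnNeighbors.mp (mem_pathEnds.mp hp').2.1).2.1
  obtain rfl : z = z' := Fin.ext (by rw [← hcol, heq, hcol'])
  rw [Sym2.congr_right.mp heq]

theorem sq_le_card_pathEnds (hxy : G.Adj x y) (ha : 0 < a) (hab : a + (U.card + k + 1) ≤ b)
    (hb : b + (U.card + k) ≤ height N G w s(x, y)) :
    k ^ 2 ≤ (pathEnds N G w U x y a b).card := by
  have hZ : k ≤ (columnNeighbors N G w y b (height N G w s(x, y)) \ U).card := by
    have hcol := le_card_columnNeighbors (a := b) hxy (Sym2.mem_mk_right x y) (by omega)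
      (le_refl (height N G w s(x, y)))
    have hsdiff := Finset.le_card_sdiff U (columnNeighbors N G w y b (height N G w s(x, y)))
    omega
  have hV : ∀ z ∈ columnNeighbors N G w y b (height N G w s(x, y)) \ U,
      k ≤ (columnNeighbors N G w z a b \ insert x U).card := by
    intro z hz
    obtain ⟨hyz, -, hbz, -⟩ := mem_columnNeighbors.mp (Finset.mem_sdiff.mp hz).1
    have hcol := le_card_columnNeighbors hyz (Sym2.mem_mk_right y z) ha hbz
    have hsdiff := Finset.le_card_sdiff (insert x U) (columnNeighbors N G w z a b)
    have hinsert := Finset.card_insert_le x U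
    omega
  calc k ^ 2 = k * k := sq k
    _ ≤ (columnNeighbors N G w y b (height N G w s(x, y)) \ U).card * k :=
        Nat.mul_le_mul_right k hZ
    _ ≤ (pathEnds N G w U x y a b).card := by
        rw [pathEnds, Finset.card_sigma, ← smul_eq_mul]
        exact Finset.card_nsmul_le_sum _ _ _ hV

theorem exists_mem_pathEnds_le_height_deleteEdges [DecidableRel G.Adj]
    (hw : Function.Injective w) (hcard : G.maxDegree * U.card < (pathEnds N G w U x y a b).card) :
    ∃ p ∈ pathEnds N G w U x y a b,
      a ≤ height N (G.deleteEdges {e | ∃ u ∈ U, u ∈ e}) w s(p.1, p.2) := by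
  have hdeleted : (G.edgeSet \ (G.deleteEdges {e | ∃ u ∈ U, u ∈ e}).edgeSet).ncard ≤
      G.maxDegree * U.card := by
    rw [SimpleGraph.edgeSet_deleteEdges, sdiff_sdiff_right_self]
    exact ncard_edgeSet_inter_incident_le G U
  rw [← Finset.card_image_of_injOn injOn_edge_pathEnds] at hcard
  have hheight := exists_le_height_of_ncard_lt (a := a) hw (G.deleteEdges_le _) ?_
    (hdeleted.trans_lt hcard)
  · simpa only [Finset.exists_mem_image] using hheight
  · rw [Finset.forall_mem_image]
    intro p hp
    obtain ⟨⟨-, hzU⟩, hv, -, hvU⟩ := mem_pathEnds.mp hp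
    obtain ⟨hzv, -, hle, -⟩ := mem_columnNeighbors.mp hv
    refine ⟨SimpleGraph.deleteEdges_adj.mpr ⟨hzv, ?_⟩, hle⟩
    rintro ⟨u, hu, hue⟩
    rcases Sym2.mem_iff.mp hue with rfl | rfl
    exacts [hzU hu, hvU hu]

end EO

theorem stmt10_general (N : ℕ) (G : SimpleGraph (Fin N)) [DecidableRel G.Adj]
    (wt : Sym2 (Fin N) → ℕ) (hw : Function.Injective wt)
    (U : Finset (Fin N)) (x y : Fin N) (hxy : G.Adj x y) (k : ℕ)
    (hht : 2 * (U.card + k) + 1 < EO.height N G wt s(x, y))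
    (hΔ : G.maxDegree * U.card < k ^ 2) :
    ∃ z v : Fin N, z ∉ U ∧ v ∉ U ∧
      G.Adj y z ∧ G.Adj z v ∧
      x ≠ z ∧ x ≠ v ∧ y ≠ v ∧ z ≠ v ∧
      wt s(x, y) < wt s(y, z) ∧ wt s(y, z) < wt s(z, v) ∧
      EO.height N G wt s(x, y) ≤
        EO.height N (G.deleteEdges {e | ∃ u ∈ U, u ∈ e}) wt s(z, v) +
          (2 * (U.card + k) + 1) := by
  obtain ⟨a, ha⟩ := Nat.exists_eq_add_of_lt hht
  have hcard : k ^ 2 ≤ (EO.pathEnds N G wt U x y (a + 1) (a + 1 + (U.card + k + 1))).card :=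
    EO.sq_le_card_pathEnds hxy a.succ_pos le_rfl (by omega)
  obtain ⟨⟨z, v⟩, hp, hheight⟩ :=
    EO.exists_mem_pathEnds_le_height_deleteEdges hw (hΔ.trans_le hcard)
  dsimp only at hheight
  obtain ⟨hlt, hlt'⟩ := EO.wt_lt_wt_lt_of_mem_pathEnds hw hxy hp
  obtain ⟨⟨hz, hzU⟩, hv, hvx, hvU⟩ := EO.mem_pathEnds.mp hp
  have hyz := (EO.mem_columnNeighbors.mp hz).1
  have hzv := (EO.mem_columnNeighbors.mp hv).1
  have hxz : x ≠ z := by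
    rintro rfl
    exact hlt.ne (congrArg wt Sym2.eq_swap)
  have hyv : y ≠ v := by
    rintro rfl
    exact hlt'.ne (congrArg wt Sym2.eq_swap)
  exact ⟨z, v, hzU, hvU, hyz, hzv, hxz, hvx.symm, hyv, hzv.ne, hlt, hlt', by omega⟩

/-- Lemma 3.2.  Let `G` be an ordered graph, `U ⊆ V(G)`, and
`xy ∈ E(G)` an edge with `h(xy, G) > 4m + 3` for a real `m` with `m ≥ |U|` and
`m²/2 > Δ(G)·|U|`.  Then there are vertices `z, v ∈ V(G) ∖ U` such that `xyzv` is an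
increasing path (`x, y, z, v` distinct, with `xy < yz < zv` in the edge order) and
`h(zv, G − U) ≥ h(xy, G) − 4m − 3`, where `G − U` is obtained from `G` by removing `U`
(formally: deleting all edges touching `U`, which leaves the height table of the induced
subgraph on `V(G) ∖ U` unchanged). -/
theorem stmt10 (N : ℕ) (G : SimpleGraph (Fin N)) [DecidableRel G.Adj]
    (wt : Sym2 (Fin N) → ℕ) (hw : Function.Injective wt)
    (U : Finset (Fin N)) (x y : Fin N) (hxy : G.Adj x y) (m : ℝ)
    (hht : 4 * m + 3 < (EO.height N G wt s(x, y) : ℝ))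
    (hUm : (U.card : ℝ) ≤ m)
    (hΔ : (G.maxDegree : ℝ) * (U.card : ℝ) < m ^ 2 / 2) :
    ∃ z v : Fin N, z ∉ U ∧ v ∉ U ∧
      G.Adj y z ∧ G.Adj z v ∧
      x ≠ z ∧ x ≠ v ∧ y ≠ v ∧ z ≠ v ∧
      wt s(x, y) < wt s(y, z) ∧ wt s(y, z) < wt s(z, v) ∧
      (EO.height N G wt s(x, y) : ℝ) - 4 * m - 3 ≤
        (EO.height N (G.deleteEdges {e | ∃ u ∈ U, u ∈ e}) wt s(z, v) : ℝ) := by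
  have hm : 0 ≤ m := (Nat.cast_nonneg _).trans hUm
  have hle : m ≤ ⌈m⌉₊ := Nat.le_ceil m
  have hlt : (⌈m⌉₊ : ℝ) < m + 1 := Nat.ceil_lt_add_one hm
  have hrows : 2 * (U.card + ⌈m⌉₊ : ℝ) + 1 < EO.height N G wt s(x, y) := by linarith
  have hdeleted : (G.maxDegree : ℝ) * U.card < (⌈m⌉₊ : ℝ) ^ 2 := by nlinarith
  obtain ⟨z, v, hzU, hvU, hyz, hzv, hxz, hxv, hyv, hne, hwt, hwt', hheight⟩ :=
    stmt10_general N G wt hw U x y hxy ⌈m⌉₊ (mod_cast hrows) (mod_cast hdeleted)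
  rify at hheight
  exact ⟨z, v, hzU, hvU, hyz, hzv, hxz, hxv, hyv, hne, hwt, hwt', by linarith⟩
end

section
/- For every n-vertex graph G with average degree d ≥ 2 and every edge-ordering of G, there is a monotone path of length at least d / 2^{C√(log₂ d · log₂ log₂ n)} for some absolute constant C. -/
open scoped Classical

/-!
Read labels as times. Suppose that average degree `D` forces a monotone path of length `ℓ`. A denser
graph has an edge both of whose ends branch, at later times, with large degree to depth
`L > log₂ n`. The set of vertices reached in time from such an end `x` cannot double `L` times, so
at some step it spans many edges both of whose ends are reached before the edge is due. The path of
length `ℓ` among these edges can be rerouted to start at `x`, at the cost of a factor `L + 1` in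
length, and this survives the deletion of a few vertices.

To chain such rooted paths, let the robustness of a vertex at a given time be the number of pieces
that it is guaranteed to be able to chain, and sort the edges by the smaller robustness of their
ends. Were there no long path, few classes would occur, so one of them would be dense and have an
edge both of whose ends start a rooted path within the class; appending a robust continuation at the
far end of that path raises the robustness of both ends, which is absurd. Hence multiplying the
length by `q` costs a factor of about `q * L ^ 2` in density, and iterating with
`q ≈ 2 ^ √(log₂ d * log₂ log₂ n)` loses only `2 ^ O(√(log₂ d * log₂ log₂ n))`.
-/

namespace EO

open SimpleGraph

variable {V : Type*} {G H : SimpleGraph V} {w : Sym2 V → ℕ}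

/-! ### Monotone paths -/

theorem Increasing.pairwise {l : List (Sym2 V)} (h : Increasing w l) :
    l.Pairwise fun e f => w e < w f :=
  haveI : IsTrans (Sym2 V) fun e f => w e < w f := ⟨fun _ _ _ => lt_trans⟩
  List.isChain_iff_pairwise.1 h

theorem isPath_append {u v z : V} {p : G.Walk u v} {q : G.Walk v z} (hp : p.IsPath)
    (hq : q.IsPath) (hpq : ∀ y ∈ p.support, y ∈ q.support → y = v) : (p.append q).IsPath := by
  have hq' : (v :: q.support.tail).Nodup := by
    rw [q.cons_tail_support]
    exact hq.support_nodup
  rw [Walk.isPath_def, Walk.support_append, List.nodup_append']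
  refine ⟨hp.support_nodup, hq'.of_cons, fun y hyp hyq => ?_⟩
  obtain rfl := hpq y hyp (List.mem_of_mem_tail hyq)
  exact (List.nodup_cons.1 hq').1 hyq

/-- `IsMonotonePath w I S p`: the walk `p` is a path whose labels increase along `p` and all lie in
`I`, and no vertex of `p`, endpoints included, is in `S`. Reading labels as times, `I` is the time
window in which `p` is traversed. -/
structure IsMonotonePath (w : Sym2 V → ℕ) (I : Set ℕ) (S : Finset V) {u v : V} (p : G.Walk u v) :
    Prop where
  isPath : p.IsPath
  increasing : Increasing w p.edges
  label_mem : ∀ e ∈ p.edges, w e ∈ I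
  notMem : ∀ y ∈ p.support, y ∉ S

namespace IsMonotonePath

variable {I J : Set ℕ} {S T : Finset V} {u v z : V} {p : G.Walk u v} {q : G.Walk v z}

theorem nil (hu : u ∉ S) : IsMonotonePath w I S (Walk.nil : G.Walk u u) where
  isPath := Walk.IsPath.nil
  increasing := List.isChain_nil
  label_mem := by simp
  notMem := by simpa using hu

theorem toWalk (h : G.Adj u v) (hI : w s(u, v) ∈ I) (hu : u ∉ S) (hv : v ∉ S) :
    IsMonotonePath w I S h.toWalk where
  isPath := Walk.IsPath.of_adj h
  increasing := List.isChain_singleton _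
  label_mem := by simpa using hI
  notMem := by simp [hu, hv]

theorem mono (hp : IsMonotonePath w I S p) (hIJ : I ⊆ J) (hTS : T ⊆ S) :
    IsMonotonePath w J T p where
  isPath := hp.isPath
  increasing := hp.increasing
  label_mem e he := hIJ (hp.label_mem e he)
  notMem y hy hyT := hp.notMem y hy (hTS hyT)

theorem mapLe (hp : IsMonotonePath w I S p) (hGH : G ≤ H) :
    IsMonotonePath w I S (p.mapLe hGH) where
  isPath := hp.isPath.mapLe hGH
  increasing := by simpa using hp.increasing
  label_mem := by simpa using hp.label_mem
  notMem := by simpa using hp.notMem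

theorem of_isSubwalk {u' v' : V} {p' : G.Walk u' v'} (hp : IsMonotonePath w I S p)
    (h : p'.IsSubwalk p) : IsMonotonePath w I S p' where
  isPath := Walk.isPath_of_isSubwalk h hp.isPath
  increasing := List.IsChain.infix hp.increasing h.edges_isInfix
  label_mem e he := hp.label_mem e (h.edges_subset he)
  notMem y hy := hp.notMem y (h.support_subset hy)

theorem append (hp : IsMonotonePath w I S p) (hq : IsMonotonePath w J S q)
    (hIJ : ∀ i ∈ I, ∀ j ∈ J, i < j) (hpq : ∀ y ∈ p.support, y ∈ q.support → y = v) :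
    IsMonotonePath w (I ∪ J) S (p.append q) where
  isPath := isPath_append hp.isPath hq.isPath hpq
  increasing := by
    rw [Walk.edges_append]
    refine List.IsChain.append hp.increasing hq.increasing fun e he f hf => ?_
    exact hIJ _ (hp.label_mem e (List.mem_of_getLast? he)) _
      (hq.label_mem f (List.mem_of_head? hf))
  label_mem e he := by
    rw [Walk.edges_append] at he
    exact (List.mem_append.1 he).imp (hp.label_mem e) (hq.label_mem e)
  notMem y hy := ((Walk.mem_support_append_iff ..).1 hy).elim (hp.notMem y) (hq.notMem y)

theorem append_Ici {a b : ℕ} (hab : a ≤ b) (hp : IsMonotonePath w (Set.Ico a b) S p)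
    (hq : IsMonotonePath w (Set.Ici b) S q) (hpq : ∀ y ∈ p.support, y ∈ q.support → y = v) :
    IsMonotonePath w (Set.Ici a) S (p.append q) :=
  (hp.append hq (fun _ hi _ hj => hi.2.trans_le hj) hpq).mono
    (Set.union_subset Set.Ico_subset_Ici_self (Set.Ici_subset_Ici.2 hab)) subset_rfl

theorem Ici_label_first (hp : IsMonotonePath w I S p) (hnil : ¬ p.Nil) :
    IsMonotonePath w (Set.Ici (w s(u, p.snd))) S p where
  isPath := hp.isPath
  increasing := hp.increasing
  label_mem e he := by
    rw [p.mk_start_snd_eq_head_edges hnil]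
    exact (hp.increasing.pairwise.imp le_of_lt).rel_head_of_rel_head_head he le_rfl
  notMem := hp.notMem

theorem inter_Iic_label_last (hp : IsMonotonePath w I S p) (hnil : ¬ p.Nil) :
    IsMonotonePath w (I ∩ Set.Iic (w s(p.penultimate, v))) S p where
  isPath := hp.isPath
  increasing := hp.increasing
  label_mem e he := by
    refine ⟨hp.label_mem e he, ?_⟩
    rw [p.mk_penultimate_end_eq_getLast_edges hnil]
    exact (hp.increasing.pairwise.imp le_of_lt).rel_getLast_of_rel_getLast_getLast he le_rfl
  notMem := hp.notMem

end IsMonotonePath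

/-- A monotone path with at least `k` edges that starts at `v`, uses only labels `≥ τ`, and misses
`S`. -/
def HasMonotonePath (G : SimpleGraph V) (w : Sym2 V → ℕ) (τ : ℕ) (S : Finset V) (v : V) (k : ℕ) :
    Prop :=
  ∃ (z : V) (p : G.Walk v z), IsMonotonePath w (Set.Ici τ) S p ∧ k ≤ p.length

section HasMonotonePath

variable {τ τ' k : ℕ} {S : Finset V} {u v z : V}

theorem hasMonotonePath_zero (hv : v ∉ S) : HasMonotonePath G w τ S v 0 :=
  ⟨v, .nil, .nil hv, Nat.zero_le _⟩

theorem HasMonotonePath.mono {l : ℕ} (h : HasMonotonePath G w τ S v k) (hτ : τ' ≤ τ)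
    (hl : l ≤ k) : HasMonotonePath G w τ' S v l :=
  let ⟨z, p, hp, hk⟩ := h
  ⟨z, p, hp.mono (Set.Ici_subset_Ici.2 hτ) subset_rfl, hl.trans hk⟩

theorem HasMonotonePath.prepend {p : G.Walk v z}
    (h : HasMonotonePath G w τ' (S ∪ p.support.toFinset.erase z) z k)
    (hp : IsMonotonePath w (Set.Ico τ τ') S p) (hτ : τ ≤ τ') :
    HasMonotonePath G w τ S v (p.length + k) := by
  obtain ⟨y, q, hq, hk⟩ := h
  have hpq : ∀ x ∈ p.support, x ∈ q.support → x = z := fun x hxp hxq => by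
    by_contra hxz
    exact hq.notMem x hxq (Finset.mem_union_right _ (by simp [hxz, hxp]))
  refine ⟨y, p.append q, hp.append_Ici hτ (hq.mono subset_rfl Finset.subset_union_left) hpq, ?_⟩
  rw [Walk.length_append]
  gcongr

-- If `q` meets `p` within its first `g` edges, at `y` say, cut both at `y`: this costs `q` at most
-- `g` edges and `p` at least one.
theorem IsMonotonePath.reroute {g τ₀ : ℕ} {p : G.Walk u v} {q : G.Walk v z} (hτ : τ₀ ≤ τ)
    (hp : IsMonotonePath w (Set.Ico τ₀ τ) S p) (hq : IsMonotonePath w (Set.Ici τ) S q)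
    (hlen : g * (p.length + 1) ≤ q.length) : HasMonotonePath G w τ₀ S u g := by
  induction hn : p.length using Nat.strong_induction_on generalizing v with | _ n ih =>
  by_cases hdisj : ∀ y ∈ p.support, y ∈ (q.take g).support → y = v
  · have hqg := hq.of_isSubwalk (q.isSubwalk_take g)
    refine ⟨_, p.append (q.take g), hp.append_Ici hτ hqg hdisj, ?_⟩
    have : g ≤ q.length := (Nat.le_mul_of_pos_right g p.length.succ_pos).trans hlen
    simp [this]
  · push Not at hdisj
    obtain ⟨y, hyp, hyqg, hyv⟩ := hdisj
    have hyq : y ∈ q.support := (q.isSubwalk_take g).support_subset hyqg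
    have hp_cut : (p.takeUntil y hyp).length < p.length :=
      Walk.length_takeUntil_lt_length hyp hyv
    have hq_cut : q.length ≤ g + (q.dropUntil y hyq).length := by
      rw [Walk.support_take, List.mem_take_iff_idxOf_lt hyq] at hyqg
      rw [Walk.length_dropUntil]
      omega
    refine ih _ (hn ▸ hp_cut) (hp.of_isSubwalk (p.isSubwalk_takeUntil hyp))
      (hq.of_isSubwalk (q.isSubwalk_dropUntil hyq)) ?_ rfl
    have : g * ((p.takeUntil y hyp).length + 1) ≤ g * p.length := Nat.mul_le_mul_left g hp_cut
    rw [Nat.mul_succ] at hlen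
    omega

end HasMonotonePath

/-! ### Proper labelings and arcs -/

/-- Edges of `G` that share a vertex have different labels. -/
def IsProperLabeling (G : SimpleGraph V) (w : Sym2 V → ℕ) : Prop :=
  ∀ ⦃u v v' : V⦄, G.Adj u v → G.Adj u v' → w s(u, v) = w s(u, v') → v = v'

theorem IsProperLabeling.mono (hw : IsProperLabeling G w) (hHG : H ≤ G) : IsProperLabeling H w :=
  fun _ _ _ h h' => hw (hHG h) (hHG h')

section Arcs

variable [Fintype V]

/-- The ordered pairs of adjacent vertices. Unlike `G.Dart` this is a set of pairs, so that arc sets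
of different graphs on `V` can be compared. -/
noncomputable def arcs (G : SimpleGraph V) : Finset (V × V) :=
  Finset.univ.filter fun p => G.Adj p.1 p.2

theorem mem_arcs {p : V × V} : p ∈ arcs G ↔ G.Adj p.1 p.2 := by
  simp [arcs]

theorem card_arcs (G : SimpleGraph V) : (arcs G).card = 2 * G.edgeSet.ncard := by
  have himage : Finset.univ.image (Dart.toProd (G := G)) = arcs G := by
    ext p
    simp only [Finset.mem_image, Finset.mem_univ, true_and, mem_arcs]
    exact ⟨fun ⟨d, hd⟩ => hd ▸ d.adj, fun hp => ⟨⟨p, hp⟩, rfl⟩⟩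
  rw [← himage, Finset.card_image_of_injective _ Dart.toProd_injective, Finset.card_univ,
    dart_card_eq_twice_card_edges, ← coe_edgeFinset, Set.ncard_coe_finset]

end Arcs

/-! ### Branching -/

section Branching

variable [Fintype V] {P : V → ℕ → Prop} {b s t τ : ℕ} {u v : V}

/-- The neighbors `u` of `v` along edges with labels `≥ τ` such that `P` holds at `u` just after the
edge `vu` has been traversed. -/
noncomputable def laterNeighbors (G : SimpleGraph V) (w : Sym2 V → ℕ) (P : V → ℕ → Prop) (v : V)
    (τ : ℕ) : Finset V :=
  Finset.univ.filter fun u => G.Adj v u ∧ τ ≤ w s(v, u) ∧ P u (w s(v, u) + 1)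

theorem mem_laterNeighbors :
    u ∈ laterNeighbors G w P v τ ↔ G.Adj v u ∧ τ ≤ w s(v, u) ∧ P u (w s(v, u) + 1) := by
  simp [laterNeighbors]

/-- `Branches G w b s v τ`: the increasing walks from `v` with labels `≥ τ` contain a tree of depth
`s` in which every inner node has at least `b` children. -/
def Branches (G : SimpleGraph V) (w : Sym2 V → ℕ) (b : ℕ) : ℕ → V → ℕ → Prop
  | 0, _, _ => True
  | s + 1, v, τ => b ≤ (laterNeighbors G w (Branches G w b s) v τ).card

theorem Branches.of_succ (h : Branches G w b (s + 1) v τ) : Branches G w b s v τ := by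
  induction s generalizing v τ with
  | zero => trivial
  | succ s ih =>
    refine le_trans h (Finset.card_le_card fun u hu => ?_)
    rw [mem_laterNeighbors] at hu ⊢
    exact ⟨hu.1, hu.2.1, ih hu.2.2⟩

theorem Branches.anti_depth (h : Branches G w b s v τ) (hts : t ≤ s) : Branches G w b t v τ :=
  Nat.decreasingInduction (motive := fun i _ => Branches G w b i v τ)
    (fun _ _ => Branches.of_succ) h hts

theorem Branches.hasMonotonePath {S : Finset V} (h : Branches G w b s v τ) (hv : v ∉ S)
    (hb : S.card + s ≤ b) : HasMonotonePath G w τ S v s := by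
  induction s generalizing v τ S with
  | zero => exact hasMonotonePath_zero hv
  | succ s ih =>
    obtain ⟨u, hu, huS⟩ : ∃ u ∈ laterNeighbors G w (Branches G w b s) v τ, u ∉ S :=
      Finset.exists_mem_notMem_of_card_lt_card (lt_of_lt_of_le (by omega) h)
    obtain ⟨hvu, hτ, hu⟩ := mem_laterNeighbors.1 hu
    have hpath : IsMonotonePath w (Set.Ico τ (w s(v, u) + 1)) S hvu.toWalk :=
      .toWalk hvu ⟨hτ, Nat.lt_succ_self _⟩ hv huS
    have hsupport : hvu.toWalk.support.toFinset.erase u = {v} := by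
      rw [show hvu.toWalk.support.toFinset = {v, u} by simp, Finset.erase_insert_of_ne hvu.ne]
      simp
    have htail : HasMonotonePath G w (w s(v, u) + 1) (S ∪ {v}) u s :=
      ih hu (by simp [huS, hvu.ne']) ((Nat.add_le_add_right (Finset.card_union_le _ _) _).trans
        (by rw [Finset.card_singleton]; omega))
    rw [← hsupport] at htail
    simpa [add_comm] using htail.prepend hpath (by omega)

theorem exists_mem_card_le_card_laterNeighbors_succ (hw : IsProperLabeling G w) {F : Finset V}
    (hF : F.Nonempty) (hFP : ∀ u ∈ F, G.Adj v u ∧ P u (w s(v, u) + 1)) :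
    ∃ y ∈ F, F.card ≤ (laterNeighbors G w P v (w s(v, y) + 1)).card + 1 := by
  obtain ⟨y, hy, hmin⟩ := F.exists_min_image (fun u => w s(v, u)) hF
  refine ⟨y, hy, ?_⟩
  have hsub : F.erase y ⊆ laterNeighbors G w P v (w s(v, y) + 1) := fun u hu => by
    obtain ⟨huy, huF⟩ := Finset.mem_erase.1 hu
    have hne : w s(v, y) ≠ w s(v, u) := fun h => huy (hw (hFP y hy).1 (hFP u huF).1 h).symm
    exact mem_laterNeighbors.2 ⟨(hFP u huF).1, (hmin u huF).lt_of_ne hne, (hFP u huF).2⟩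
  have := Finset.card_le_card hsub
  rw [Finset.card_erase_of_mem hy] at this
  omega

/-- The largest `s ≤ L` with `Branches G w b s v τ`. -/
noncomputable def branchRank (G : SimpleGraph V) (w : Sym2 V → ℕ) (b L : ℕ) (v : V) (τ : ℕ) : ℕ :=
  Nat.findGreatest (fun s => Branches G w b s v τ) L

variable {L : ℕ}

theorem branches_branchRank : Branches G w b (branchRank G w b L v τ) v τ :=
  Nat.findGreatest_spec (P := fun s => Branches G w b s v τ) (Nat.zero_le L) trivial

theorem not_branches_succ_branchRank (h : branchRank G w b L v τ < L) :
    ¬ Branches G w b (branchRank G w b L v τ + 1) v τ :=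
  Nat.findGreatest_is_greatest (P := fun s => Branches G w b s v τ) (Nat.lt_succ_self _) h

-- Otherwise, at the earliest of the edges in question, `u` would branch to depth `s + 1`.
theorem card_filter_branchRank_eq_le (hw : IsProperLabeling G w) (hs : s < L) :
    (Finset.univ.filter fun v => G.Adj u v ∧ branchRank G w b L u (w s(u, v) + 1) = s ∧
      s ≤ branchRank G w b L v (w s(u, v) + 1)).card ≤ b := by
  by_contra! hlt
  obtain ⟨y, hy, hcard⟩ := exists_mem_card_le_card_laterNeighbors_succ (P := Branches G w b s) hw
    (Finset.card_pos.1 (Nat.zero_lt_of_lt hlt)) fun v hv => by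
      simp only [Finset.mem_filter, Finset.mem_univ, true_and] at hv
      exact ⟨hv.1, branches_branchRank.anti_depth hv.2.2⟩
  simp only [Finset.mem_filter, Finset.mem_univ, true_and] at hy
  refine not_branches_succ_branchRank (hy.2.1.trans_lt hs) ?_
  rw [hy.2.1]
  exact Nat.le_of_lt_succ (hlt.trans_le hcard)

theorem card_le_of_forall_branchRank_le (hw : IsProperLabeling G w) {A : Finset V}
    (hA : G.support ⊆ A) {U : Finset (V × V)}
    (hU : ∀ p ∈ U, G.Adj p.1 p.2 ∧ branchRank G w b L p.1 (w s(p.1, p.2) + 1) < L ∧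
      branchRank G w b L p.1 (w s(p.1, p.2) + 1) ≤ branchRank G w b L p.2 (w s(p.1, p.2) + 1)) :
    U.card ≤ L * b * A.card := by
  have hcard : U.card ≤ b * (A ×ˢ Finset.range L).card := by
    refine Finset.card_le_mul_card_image_of_maps_to
      (f := fun p => (p.1, branchRank G w b L p.1 (w s(p.1, p.2) + 1))) (fun p hp => ?_) b ?_
    · exact Finset.mem_product.2 ⟨hA ⟨_, (hU p hp).1⟩, Finset.mem_range.2 (hU p hp).2.1⟩
    · rintro ⟨u, s⟩ hus
      refine le_trans ?_ (card_filter_branchRank_eq_le hw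
        (Finset.mem_range.1 (Finset.mem_product.1 hus).2) (u := u))
      refine Finset.card_le_card_of_injOn Prod.snd (fun p hp => ?_) fun p hp q hq hpq => ?_
      · obtain ⟨hpU, hpus⟩ := Finset.mem_filter.1 hp
        obtain ⟨rfl, rfl⟩ := Prod.mk.inj hpus
        exact Finset.mem_filter.2 ⟨Finset.mem_univ _, (hU p hpU).1, rfl, (hU p hpU).2.2⟩
      · have hp1 := congrArg Prod.fst (Finset.mem_filter.1 hp).2
        have hq1 := congrArg Prod.fst (Finset.mem_filter.1 hq).2
        exact Prod.ext (hp1.trans hq1.symm) hpq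
  rw [Finset.card_product, Finset.card_range] at hcard
  linarith

theorem exists_adj_branches (hw : IsProperLabeling G w) {A : Finset V}
    (hA : G.support ⊆ A) (hcard : 2 * (L * b * A.card) < (arcs G).card) :
    ∃ x y, G.Adj x y ∧ Branches G w b L x (w s(x, y) + 1) ∧
      Branches G w b L y (w s(x, y) + 1) := by
  by_contra! hcon
  let rank (u v : V) : ℕ := branchRank G w b L u (w s(u, v) + 1)
  let U : Finset (V × V) := (arcs G).filter fun p => rank p.1 p.2 ≤ rank p.2 p.1
  have hU : U.card ≤ L * b * A.card := by
    refine card_le_of_forall_branchRank_le hw hA fun ⟨u, v⟩ hp => ?_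
    simp only [U, rank, Finset.mem_filter, mem_arcs, Sym2.eq_swap (a := v) (b := u)] at hp
    refine ⟨hp.1, lt_of_not_ge fun hL => ?_, hp.2⟩
    exact hcon u v hp.1 (branches_branchRank.anti_depth hL)
      (branches_branchRank.anti_depth (hL.trans hp.2))
  have hsub : arcs G ⊆ U ∪ U.image Prod.swap := fun p hp => by
    rcases le_total (rank p.1 p.2) (rank p.2 p.1) with h | h
    · exact Finset.mem_union_left _ (Finset.mem_filter.2 ⟨hp, h⟩)
    · refine Finset.mem_union_right _ (Finset.mem_image.2 ⟨p.swap, ?_, p.swap_swap⟩)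
      exact Finset.mem_filter.2 ⟨mem_arcs.2 (mem_arcs.1 hp).symm, h⟩
  have := (Finset.card_le_card hsub).trans (Finset.card_union_le _ _)
  have := U.card_image_le (f := Prod.swap)
  omega

end Branching

/-! ### Densities that force long monotone paths -/

section DensityForces

variable [Fintype V] {D ℓ : ℕ}

/-- Every graph on `V` that is properly labeled by `w` and has average degree more than `D` on a set
supporting all its edges contains a monotone path of length at least `ℓ`. -/
def DensityForces (w : Sym2 V → ℕ) (D ℓ : ℕ) : Prop :=
  ∀ (G : SimpleGraph V) (A : Finset V), IsProperLabeling G w → G.support ⊆ A →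
    D * A.card < (arcs G).card → ∃ v, HasMonotonePath G w 0 ∅ v ℓ

theorem DensityForces.mono {D' ℓ' : ℕ} (h : DensityForces w D ℓ) (hD : D ≤ D') (hℓ : ℓ' ≤ ℓ) :
    DensityForces w D' ℓ' := fun G A hw hA hcard =>
  let ⟨v, hv⟩ := h G A hw hA ((Nat.mul_le_mul_right _ hD).trans_lt hcard)
  ⟨v, hv.mono le_rfl hℓ⟩

theorem densityForces_zero_one : DensityForces w 0 1 := fun G A _ _ hcard => by
  obtain ⟨p, hp⟩ := Finset.card_pos.1 (Nat.zero_lt_of_lt hcard)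
  exact ⟨p.1, p.2, (mem_arcs.1 hp).toWalk, .toWalk _ (Nat.zero_le _) (by simp) (by simp), by simp⟩

theorem densityForces_two_mul_sq (m : ℕ) : DensityForces w (2 * m ^ 2) m :=
  fun G A hw hA hcard => by
    obtain ⟨x, y, _, hx, _⟩ := exists_adj_branches hw hA (b := m) (L := m) (by
      rwa [← sq, ← mul_assoc])
    exact ⟨x, (hx.hasMonotonePath (S := ∅) (by simp) (by simp)).mono (Nat.zero_le _) le_rfl⟩

end DensityForces

/-! ### Long monotone paths from a branching vertex -/

section Rooted

/-- `v` can be reached from `x` by a monotone path of length at most `s` that misses `S`, leaves no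
earlier than `τ₀` and arrives before `τ`. -/
def Reaches (G : SimpleGraph V) (w : Sym2 V → ℕ) (S : Finset V) (τ₀ : ℕ) (x : V) (s : ℕ) (v : V)
    (τ : ℕ) : Prop :=
  τ₀ ≤ τ ∧ ∃ p : G.Walk x v, IsMonotonePath w (Set.Ico τ₀ τ) S p ∧ p.length ≤ s

variable {S : Finset V} {b L D ℓ g c s t τ₀ τ τ' : ℕ} {u v x : V}

namespace Reaches

theorem refl (hx : x ∉ S) : Reaches G w S τ₀ x s x τ₀ :=
  ⟨le_rfl, .nil, .nil hx, Nat.zero_le _⟩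

theorem mono (h : Reaches G w S τ₀ x s v τ) (hst : s ≤ t) (hτ : τ ≤ τ') :
    Reaches G w S τ₀ x t v τ' :=
  let ⟨hτ₀, p, hp, hlen⟩ := h
  ⟨hτ₀.trans hτ, p, hp.mono (Set.Ico_subset_Ico_right hτ) subset_rfl, hlen.trans hst⟩

theorem notMem (h : Reaches G w S τ₀ x s v τ) : v ∉ S :=
  let ⟨_, p, hp, _⟩ := h
  hp.notMem v p.end_mem_support

theorem step (h : Reaches G w S τ₀ x s u (w s(u, v))) (huv : G.Adj u v) (hv : v ∉ S) :
    Reaches G w S τ₀ x (s + 1) v (w s(u, v) + 1) := by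
  obtain ⟨hτ₀, p, hp, hlen⟩ := h
  have hle : w s(u, v) ≤ w s(u, v) + 1 := Nat.le_succ _
  refine ⟨hτ₀.trans hle, ?_⟩
  by_cases hvp : v ∈ p.support
  · exact ⟨p.takeUntil v hvp, (hp.of_isSubwalk (p.isSubwalk_takeUntil hvp)).mono
      (Set.Ico_subset_Ico_right hle) subset_rfl,
      (p.length_takeUntil_le_length hvp).trans (hlen.trans s.le_succ)⟩
  · have hedge : IsMonotonePath w {w s(u, v)} S huv.toWalk :=
      .toWalk huv rfl (hp.notMem u p.end_mem_support) hv
    refine ⟨p.append huv.toWalk, ?_, by simpa using hlen⟩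
    refine (hp.append hedge (fun _ hi _ hj => hj ▸ hi.2) ?_).mono ?_ subset_rfl
    · intro y hyp hy
      have hy : y = u ∨ y = v := by simpa using hy
      exact hy.resolve_right fun h => hvp (h ▸ hyp)
    · exact Set.union_subset (Set.Ico_subset_Ico_right hle) (by simpa using hτ₀)

end Reaches

variable [Fintype V]

/-- The vertices `v` that can be reached from `x` within `s` steps early enough for `v` to still
branch to the remaining depth `L - s`. -/
noncomputable def branchingBall (G : SimpleGraph V) (w : Sym2 V → ℕ) (b L : ℕ) (S : Finset V)
    (τ₀ : ℕ) (x : V) (s : ℕ) : Finset V :=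
  Finset.univ.filter fun v => ∃ τ, Reaches G w S τ₀ x s v τ ∧ Branches G w b (L - s) v τ

theorem mem_branchingBall : v ∈ branchingBall G w b L S τ₀ x s ↔
    ∃ τ, Reaches G w S τ₀ x s v τ ∧ Branches G w b (L - s) v τ := by
  simp [branchingBall]

theorem branchingBall_subset_succ :
    branchingBall G w b L S τ₀ x s ⊆ branchingBall G w b L S τ₀ x (s + 1) := fun v hv => by
  obtain ⟨τ, hreach, hbranch⟩ := mem_branchingBall.1 hv
  exact mem_branchingBall.2 ⟨τ, hreach.mono s.le_succ le_rfl, hbranch.anti_depth (by omega)⟩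

/-- The arcs along which `branchingBall G w b L S τ₀ x s` expands to the next ball. -/
noncomputable def expandingArcs (G : SimpleGraph V) (w : Sym2 V → ℕ) (b L : ℕ) (S : Finset V)
    (τ₀ : ℕ) (x : V) (s : ℕ) : Finset (V × V) :=
  (arcs G).filter fun p => p.1 ∈ branchingBall G w b L S τ₀ x s ∧
    Reaches G w S τ₀ x s p.1 (w s(p.1, p.2)) ∧ p.2 ∉ S ∧
    Branches G w b (L - (s + 1)) p.2 (w s(p.1, p.2) + 1)

theorem mem_expandingArcs : (u, v) ∈ expandingArcs G w b L S τ₀ x s ↔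
    G.Adj u v ∧ u ∈ branchingBall G w b L S τ₀ x s ∧ Reaches G w S τ₀ x s u (w s(u, v)) ∧ v ∉ S ∧
      Branches G w b (L - (s + 1)) v (w s(u, v) + 1) := by
  simp [expandingArcs, mem_arcs]

theorem mul_card_branchingBall_le_card_expandingArcs (hb : c + S.card ≤ b) (hs : s < L) :
    c * (branchingBall G w b L S τ₀ x s).card ≤ (expandingArcs G w b L S τ₀ x s).card := by
  refine Finset.mul_card_image_le_card_of_maps_to (f := Prod.fst)
    (fun p hp => (mem_expandingArcs.1 hp).2.1) c fun u hu => ?_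
  obtain ⟨τ, hreach, hbranch⟩ := mem_branchingBall.1 hu
  rw [show L - s = (L - (s + 1)) + 1 by omega] at hbranch
  let N := laterNeighbors G w (Branches G w b (L - (s + 1))) u τ
  have hN : c ≤ (N \ S).card := by
    have : b ≤ N.card := hbranch
    have := Finset.le_card_sdiff S N
    omega
  refine hN.trans (Finset.card_le_card_of_injOn (Prod.mk u) (fun v hv => ?_)
    (Prod.mk_right_injective u).injOn)
  obtain ⟨hvN, hvS⟩ := Finset.mem_sdiff.1 hv
  obtain ⟨huv, hτ, hv⟩ := mem_laterNeighbors.1 hvN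
  exact Finset.mem_filter.2
    ⟨mem_expandingArcs.2 ⟨huv, hu, hreach.mono le_rfl hτ, hvS, hv⟩, rfl⟩

theorem Reaches.of_mem_expandingArcs (h : (u, v) ∈ expandingArcs G w b L S τ₀ x s) :
    Reaches G w S τ₀ x (s + 1) v (w s(u, v) + 1) :=
  let ⟨huv, _, hreach, hvS, _⟩ := mem_expandingArcs.1 h
  hreach.step huv hvS

theorem mem_branchingBall_of_mem_expandingArcs (h : (u, v) ∈ expandingArcs G w b L S τ₀ x s) :
    v ∈ branchingBall G w b L S τ₀ x (s + 1) :=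
  mem_branchingBall.2 ⟨_, .of_mem_expandingArcs h, (mem_expandingArcs.1 h).2.2.2.2⟩

/-- The edges inside `branchingBall G w b L S τ₀ x s` both of whose ends are reached from `x` before
the edge is due, so that each of them can continue a path from `x` in either direction. -/
def reachedGraph (G : SimpleGraph V) (w : Sym2 V → ℕ) (b L : ℕ) (S : Finset V) (τ₀ : ℕ) (x : V)
    (s : ℕ) : SimpleGraph V where
  Adj u v := G.Adj u v ∧
    (u ∈ branchingBall G w b L S τ₀ x s ∧ Reaches G w S τ₀ x s u (w s(u, v))) ∧
    (v ∈ branchingBall G w b L S τ₀ x s ∧ Reaches G w S τ₀ x s v (w s(u, v)))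
  symm := ⟨fun u v h => by
    rw [Sym2.eq_swap]
    exact ⟨h.1.symm, h.2.2, h.2.1⟩⟩
  loopless := ⟨fun u h => h.1.ne rfl⟩

theorem reachedGraph_le : reachedGraph G w b L S τ₀ x s ≤ G :=
  fun _ _ h => h.1

-- An expanding arc `uv` missing from the reached graph is the earliest way into `v`, hence
-- determined by `v`.
theorem card_expandingArcs_le (hw : IsProperLabeling G w) :
    (expandingArcs G w b L S τ₀ x s).card ≤
      (arcs (reachedGraph G w b L S τ₀ x (s + 1))).card +
        (branchingBall G w b L S τ₀ x (s + 1)).card := by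
  let late : Finset (V × V) := (expandingArcs G w b L S τ₀ x s).filter fun p =>
    ¬ Reaches G w S τ₀ x (s + 1) p.2 (w s(p.1, p.2))
  have hlate : late.card ≤ (branchingBall G w b L S τ₀ x (s + 1)).card := by
    refine Finset.card_le_card_of_injOn Prod.snd (fun p hp =>
      mem_branchingBall_of_mem_expandingArcs (Finset.mem_filter.1 hp).1) ?_
    rintro ⟨u, v⟩ hp ⟨u', _⟩ hp' (rfl : v = _)
    obtain ⟨hp, hnot⟩ := Finset.mem_filter.1 hp
    obtain ⟨hp', hnot'⟩ := Finset.mem_filter.1 hp'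
    have hlabel : w s(u, v) = w s(u', v) := by
      refine le_antisymm (not_lt.1 fun h => hnot ?_) (not_lt.1 fun h => hnot' ?_)
      · exact (Reaches.of_mem_expandingArcs hp').mono le_rfl h
      · exact (Reaches.of_mem_expandingArcs hp).mono le_rfl h
    rw [Sym2.eq_swap, Sym2.eq_swap (a := u')] at hlabel
    rw [hw (mem_expandingArcs.1 hp).1.symm (mem_expandingArcs.1 hp').1.symm hlabel]
  have hsub : expandingArcs G w b L S τ₀ x s \ late ⊆
      arcs (reachedGraph G w b L S τ₀ x (s + 1)) := fun ⟨u, v⟩ hp => by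
    obtain ⟨hp, hp_late⟩ := Finset.mem_sdiff.1 hp
    have hv : Reaches G w S τ₀ x (s + 1) v (w s(u, v)) := by
      by_contra h
      exact hp_late (Finset.mem_filter.2 ⟨hp, h⟩)
    obtain ⟨huv, hu, hreach, -⟩ := mem_expandingArcs.1 hp
    exact mem_arcs.2 ⟨huv, ⟨branchingBall_subset_succ hu, hreach.mono s.le_succ le_rfl⟩,
      mem_branchingBall_of_mem_expandingArcs hp, hv⟩
  have := Finset.le_card_sdiff late (expandingArcs G w b L S τ₀ x s)
  have := Finset.card_le_card hsub
  omega

theorem mul_card_branchingBall_lt_card_arcs_reachedGraph (hw : IsProperLabeling G w)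
    (hb : 2 * D + 2 + S.card ≤ b) (hs : s < L)
    (hgrow : (branchingBall G w b L S τ₀ x (s + 1)).card <
      2 * (branchingBall G w b L S τ₀ x s).card) :
    D * (branchingBall G w b L S τ₀ x (s + 1)).card <
      (arcs (reachedGraph G w b L S τ₀ x (s + 1))).card := by
  have hexpand := (mul_card_branchingBall_le_card_expandingArcs (G := G) (w := w) (τ₀ := τ₀)
    (x := x) hb hs).trans (card_expandingArcs_le hw)
  have := Nat.mul_lt_mul_of_pos_left hgrow D.succ_pos
  linarith

theorem hasMonotonePath_of_reachedGraph (hg : 0 < g)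
    (h : HasMonotonePath (reachedGraph G w b L S τ₀ x s) w 0 ∅ v (g * (s + 1))) :
    HasMonotonePath G w τ₀ S x g := by
  obtain ⟨z, q, hq, hlen⟩ := h
  have hnil : ¬ q.Nil := fun hnil => by
    rw [Walk.length_eq_zero_iff.2 hnil] at hlen
    exact (Nat.mul_pos hg s.succ_pos).not_ge hlen
  obtain ⟨hτ₀, p, hp, hps⟩ := (q.adj_snd hnil).2.1.2
  have hqS : ∀ y ∈ q.support, y ∉ S := fun y hy => by
    obtain ⟨e, he, hye⟩ := (Walk.mem_support_iff_exists_mem_edges_of_not_nil hnil).1 hy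
    obtain ⟨y', rfl⟩ := hye
    exact (q.adj_of_mem_edges he).2.1.2.notMem
  have hq' : IsMonotonePath w (Set.Ici (w s(v, q.snd))) S q :=
    { hq.Ici_label_first hnil with notMem := hqS }
  refine hp.reroute hτ₀ (hq'.mapLe reachedGraph_le) ?_
  rw [Walk.length_mapLe]
  exact (Nat.mul_le_mul_left g (Nat.succ_le_succ hps)).trans hlen

-- Were there no such path, the ball would double in each of the `L` steps and outgrow `V`.
theorem Branches.hasMonotonePath_of_densityForces (hx : Branches G w b L x τ₀)
    (hw : IsProperLabeling G w) (hD : DensityForces w D ℓ) (hg : 0 < g) (hℓ : g * (L + 1) ≤ ℓ)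
    (hL : Fintype.card V < 2 ^ L) (hb : 2 * D + 2 + S.card ≤ b) (hxS : x ∉ S) :
    HasMonotonePath G w τ₀ S x g := by
  by_contra hcon
  have hdouble : ∀ s < L, 2 * (branchingBall G w b L S τ₀ x s).card ≤
      (branchingBall G w b L S τ₀ x (s + 1)).card := fun s hs => by
    by_contra! hgrow
    obtain ⟨v, hv⟩ := hD (reachedGraph G w b L S τ₀ x (s + 1)) _ (hw.mono reachedGraph_le)
      (fun u ⟨_, huv⟩ => huv.2.1.1)
      (mul_card_branchingBall_lt_card_arcs_reachedGraph hw hb hs hgrow)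
    have hlen : g * (s + 1 + 1) ≤ ℓ := (Nat.mul_le_mul_left g (by omega)).trans hℓ
    exact hcon (hasMonotonePath_of_reachedGraph hg (hv.mono le_rfl hlen))
  have hpow : ∀ s ≤ L, 2 ^ s ≤ (branchingBall G w b L S τ₀ x s).card := fun s hs => by
    induction s with
    | zero => exact Finset.card_pos.2 ⟨x, mem_branchingBall.2 ⟨τ₀, .refl hxS, hx⟩⟩
    | succ s ih =>
      have := ih (by omega)
      have := hdouble s hs
      omega
  exact hL.not_ge ((hpow L le_rfl).trans (Finset.card_le_univ _))

end Rooted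

/-! ### Amplification -/

section Robustness

variable {t g a c τ : ℕ} {u v : V}

/-- `IsRobust G w t g v τ c`: for each `c' ≤ c`, monotone paths of length `c' * g` from `v` with
labels `≥ τ` exist even after deleting any `(t - c') * g` vertices other than `v`. -/
def IsRobust (G : SimpleGraph V) (w : Sym2 V → ℕ) (t g : ℕ) (v : V) (τ c : ℕ) : Prop :=
  ∀ c' ≤ c, ∀ S : Finset V, S.card + c' * g ≤ t * g → v ∉ S → HasMonotonePath G w τ S v (c' * g)

theorem IsRobust.anti (h : IsRobust G w t g v τ c) (hac : a ≤ c) : IsRobust G w t g v τ a :=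
  fun c' hc' => h c' (hc'.trans hac)

theorem IsRobust.succ (h : IsRobust G w t g v τ a) (hHG : H ≤ G) (hg : 0 < g)
    (hrobust : ∀ ⦃y z⦄, H.Adj y z → IsRobust G w t g z (w s(y, z) + 1) a)
    (hpath : ∀ S : Finset V, S.card ≤ t * g → v ∉ S → HasMonotonePath H w τ S v g) :
    IsRobust G w t g v τ (a + 1) := by
  intro c' hc' S hS hv
  rcases Nat.le_succ_iff.1 hc' with hc' | rfl
  · exact h c' hc' S hS hv
  obtain ⟨_, q, hq, hlen⟩ := hpath S (by omega) hv
  obtain ⟨z, p, hp, hpg⟩ : ∃ (z : V) (p : H.Walk v z),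
      IsMonotonePath w (Set.Ici τ) S p ∧ p.length = g :=
    ⟨_, q.take g, hq.of_isSubwalk (q.isSubwalk_take g), by simpa using hlen⟩
  have hnil : ¬ p.Nil := fun hnil => hg.ne' (hpg.symm.trans (Walk.length_eq_zero_iff.2 hnil))
  have hp_last : IsMonotonePath w (Set.Ico τ (w s(p.penultimate, z) + 1)) S p :=
    (hp.inter_Iic_label_last hnil).mono (fun _ hi => ⟨hi.1, Nat.lt_succ_of_le hi.2⟩) subset_rfl
  have hτ : τ ≤ w s(p.penultimate, z) := by
    refine hp.label_mem _ ?_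
    rw [p.mk_penultimate_end_eq_getLast_edges hnil]
    exact List.getLast_mem _
  have hcard : (p.support.toFinset.erase z).card = g := by
    rw [Finset.card_erase_of_mem (by simp), List.toFinset_card_of_nodup hp.isPath.support_nodup,
      p.length_support, hpg, Nat.add_sub_cancel]
  have htail : HasMonotonePath G w (w s(p.penultimate, z) + 1)
      (S ∪ p.support.toFinset.erase z) z (a * g) := by
    refine hrobust (p.adj_penultimate hnil) a le_rfl _ ?_ ?_
    · have := Finset.card_union_le S (p.support.toFinset.erase z)
      rw [Nat.succ_mul] at hS
      omega
    · simpa using hp.notMem z p.end_mem_support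
  rw [← Walk.support_mapLe_eq_support hHG] at htail
  have := htail.prepend (hp_last.mapLe hHG) (hτ.trans (Nat.le_succ _))
  rwa [Walk.length_mapLe, hpg, add_comm, ← Nat.succ_mul] at this

/-- The largest `c ≤ t` with `IsRobust G w t g v τ c`. -/
noncomputable def robustness (G : SimpleGraph V) (w : Sym2 V → ℕ) (t g : ℕ) (v : V) (τ : ℕ) : ℕ :=
  Nat.findGreatest (IsRobust G w t g v τ) t

theorem isRobust_robustness : IsRobust G w t g v τ (robustness G w t g v τ) := by
  refine Nat.findGreatest_spec (P := IsRobust G w t g v τ) (Nat.zero_le t) fun c' hc' S _ hv => ?_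
  rw [Nat.le_zero.1 hc', zero_mul]
  exact hasMonotonePath_zero hv

theorem hasMonotonePath_of_le_robustness (h : t ≤ robustness G w t g v τ) :
    HasMonotonePath G w τ ∅ v (t * g) :=
  isRobust_robustness t h ∅ (by simp) (by simp)

/-- The smaller robustness of the two ends of the edge `uv` just after it has been traversed. -/
noncomputable def edgeRobustness (G : SimpleGraph V) (w : Sym2 V → ℕ) (t g : ℕ) (u v : V) : ℕ :=
  min (robustness G w t g u (w s(u, v) + 1)) (robustness G w t g v (w s(u, v) + 1))

/-- The edges of `G` whose edge robustness is exactly `a`. -/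
def robustnessLevel (G : SimpleGraph V) (w : Sym2 V → ℕ) (t g a : ℕ) : SimpleGraph V where
  Adj u v := G.Adj u v ∧ edgeRobustness G w t g u v = a
  symm := ⟨fun u v h => ⟨h.1.symm, by rw [edgeRobustness, min_comm, Sym2.eq_swap]; exact h.2⟩⟩
  loopless := ⟨fun u h => h.1.ne rfl⟩

theorem robustnessLevel_le : robustnessLevel G w t g a ≤ G :=
  fun _ _ h => h.1

variable [Fintype V] {D ℓ L : ℕ}

theorem lt_robustness_of_branches (hw : IsProperLabeling G w) (hD : DensityForces w D ℓ)
    (hg : 0 < g) (hℓ : g * (L + 1) ≤ ℓ) (hL : Fintype.card V < 2 ^ L) (hat : a < t)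
    (ha : a ≤ robustness G w t g v τ)
    (hv : Branches (robustnessLevel G w t g a) w (2 * D + 2 + t * g) L v τ) :
    a < robustness G w t g v τ := by
  refine Nat.le_findGreatest hat ((isRobust_robustness.anti ha).succ
    (robustnessLevel_le (w := w) (t := t) (g := g) (a := a)) hg ?_ ?_)
  · exact fun y z hyz => isRobust_robustness.anti (hyz.2 ▸ min_le_right _ _)
  · exact fun S hS hvS => hv.hasMonotonePath_of_densityForces (hw.mono robustnessLevel_le) hD hg hℓ
      hL (Nat.add_le_add_left hS _) hvS

theorem DensityForces.amplify (hD : DensityForces w D ℓ) (hg : 0 < g) (hℓ : g * (L + 1) ≤ ℓ)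
    (hL : Fintype.card V < 2 ^ L) (t : ℕ) :
    DensityForces w (t * (2 * L * (2 * D + 2 + t * g))) (t * g) := by
  intro G A hw hA hcard
  by_contra! hcon
  have hlt : ∀ v τ, robustness G w t g v τ < t := fun v τ => lt_of_not_ge fun h =>
    hcon v ((hasMonotonePath_of_le_robustness h).mono (Nat.zero_le _) le_rfl)
  obtain ⟨a, ha, hfiber⟩ := Finset.exists_lt_card_fiber_of_mul_lt_card_of_maps_to
    (s := arcs G) (t := Finset.range t) (f := fun p => edgeRobustness G w t g p.1 p.2)
    (n := 2 * (L * (2 * D + 2 + t * g) * A.card))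
    (fun p _ => Finset.mem_range.2 ((min_le_left _ _).trans_lt (hlt _ _)))
    (by rw [Finset.card_range]; linarith)
  have hlevel : (arcs G).filter (fun p => edgeRobustness G w t g p.1 p.2 = a) =
      arcs (robustnessLevel G w t g a) := by
    ext p
    rw [Finset.mem_filter, mem_arcs, mem_arcs]
    rfl
  obtain ⟨x, y, hxy, hx, hy⟩ := exists_adj_branches (hw.mono robustnessLevel_le)
    (fun u ⟨v, huv⟩ => hA ⟨v, huv.1⟩) (hlevel ▸ hfiber)
  have hat := Finset.mem_range.1 ha
  refine hxy.2.not_gt (lt_min ?_ ?_)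
  · exact lt_robustness_of_branches hw hD hg hℓ hL hat (hxy.2 ▸ min_le_left _ _) hx
  · exact lt_robustness_of_branches hw hD hg hℓ hL hat (hxy.2 ▸ min_le_right _ _) hy

theorem densityForces_pow {q : ℕ} (hq : 0 < q) (hL : Fintype.card V < 2 ^ L) (r : ℕ) :
    DensityForces w (q ^ (r + 2) * (8 * (L + 1) ^ 2) ^ (r + 1)) (q ^ (r + 1) * (L + 1)) := by
  induction r with
  | zero =>
    refine (densityForces_two_mul_sq (q * (L + 1))).mono ?_ (by simp)
    calc 2 * (q * (L + 1)) ^ 2 ≤ 8 * (q * (L + 1)) ^ 2 := by gcongr; norm_num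
      _ = q ^ (0 + 2) * (8 * (L + 1) ^ 2) ^ (0 + 1) := by ring
  | succ r ih =>
    refine (ih.amplify (Nat.pow_pos hq) le_rfl hL (q * (L + 1))).mono ?_ (le_of_eq (by ring))
    set D := q ^ (r + 2) * (8 * (L + 1) ^ 2) ^ (r + 1) with hD
    have hT_pos : 0 < q * (L + 1) * q ^ (r + 1) := by positivity
    have hTD : 2 * (q * (L + 1) * q ^ (r + 1)) ≤ D := by
      have hbase : 2 * (L + 1) ≤ (8 * (L + 1) ^ 2) ^ (r + 1) :=
        le_trans (by nlinarith) (Nat.le_self_pow r.succ_ne_zero _)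
      calc 2 * (q * (L + 1) * q ^ (r + 1)) = q ^ (r + 2) * (2 * (L + 1)) := by ring
        _ ≤ D := Nat.mul_le_mul_left _ hbase
    calc q * (L + 1) * (2 * L * (2 * D + 2 + q * (L + 1) * q ^ (r + 1)))
      _ ≤ q * (L + 1) * (2 * (L + 1) * (4 * D)) := by gcongr <;> omega
      _ = q ^ (r + 1 + 2) * (8 * (L + 1) ^ 2) ^ (r + 1 + 1) := by rw [hD]; ring

end Robustness

/-! ### Choice of parameters -/

section Parameters

open Real

-- The parameters balance the losses `s` and `l * r` against each other: `s ≈ √(y * l)` and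
-- `r ≈ y / (s + l)`.
theorem exists_nat_mul_add_lt {l y : ℝ} (hl : 1 ≤ l) (hy : 6 * √(y * l) < y) :
    ∃ s r : ℕ, s * (r + 2) + l * (r + 1) < y ∧ y - 6 * √(y * l) ≤ s * (r + 1) := by
  set R := √(y * l)
  have hR : 0 ≤ R := sqrt_nonneg _
  have hy_pos : 0 < y := by linarith
  have hR_sq : R * R = y * l := mul_self_sqrt (by positivity)
  have hRl : 6 * l ≤ R := by nlinarith
  obtain ⟨s, hRs, hsR⟩ : ∃ s : ℕ, R ≤ s ∧ s < R + 1 :=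
    ⟨⌈R⌉₊, Nat.le_ceil R, Nat.ceil_lt_add_one hR⟩
  have hsl : 0 < s + l := by linarith
  obtain ⟨r, hr⟩ : ∃ r, ⌊y / (s + l)⌋₊ = r + 2 := by
    refine ⟨_, (Nat.sub_add_cancel (Nat.le_floor ?_)).symm⟩
    rw [Nat.cast_ofNat, le_div_iff₀ hsl]
    linarith
  have hr_le : (r + 2) * (s + l) ≤ y := by
    rw [← le_div_iff₀ hsl]
    exact_mod_cast hr ▸ Nat.floor_le (div_nonneg hy_pos.le hsl.le)
  have hr_lt : y < (r + 3) * (s + l) := by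
    rw [← div_lt_iff₀ hsl]
    have := Nat.lt_floor_add_one (y / (s + l))
    rw [hr] at this
    push_cast at this
    linarith
  refine ⟨s, r, by linarith, ?_⟩
  have hs_mul : y - R ≤ s * (r + 3) := by
    refine le_of_mul_le_mul_right ?_ hsl
    nlinarith [mul_le_mul_of_nonneg_left hr_lt.le (hR.trans hRs)]
  linarith

variable {n : ℕ} {d : ℝ}

theorem half_le_logb_logb (hn : 3 ≤ n) : 1 / 2 ≤ logb 2 (logb 2 n) := by
  have hn : (3 : ℝ) ≤ n := mod_cast hn
  have hlog : 3 / 2 ≤ logb 2 n := by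
    rw [le_logb_iff_rpow_le one_lt_two (by linarith)]
    refine le_trans (le_of_sq_le_sq ?_ zero_le_three) hn
    rw [← rpow_natCast, ← rpow_mul zero_le_two]
    norm_num
  rw [le_logb_iff_rpow_le one_lt_two (by linarith), ← sqrt_eq_rpow]
  exact (sqrt_le_iff.2 (by norm_num)).trans hlog

theorem eight_mul_sq_log_le (hn : 2 ≤ n) :
    8 * ((Nat.log 2 n + 1 : ℝ) + 1) ^ 2 ≤ 2 ^ (7 + 2 * logb 2 (logb 2 n)) := by
  have hlog : 1 ≤ logb 2 n := by
    rw [le_logb_iff_rpow_le one_lt_two (by positivity)]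
    simpa using hn
  have hfloor : (Nat.log 2 n : ℝ) ≤ logb 2 n := natLog_le_logb n 2
  have hpow : (2 : ℝ) ^ (7 + 2 * logb 2 (logb 2 n)) = 128 * logb 2 n ^ 2 := by
    rw [rpow_add two_pos, mul_comm 2, rpow_mul zero_le_two,
      rpow_logb two_pos (by norm_num) (by linarith)]
    norm_num
  calc 8 * ((Nat.log 2 n + 1 : ℝ) + 1) ^ 2 ≤ 8 * (3 * logb 2 n) ^ 2 := by gcongr; linarith
    _ ≤ 128 * logb 2 n ^ 2 := by nlinarith [sq_nonneg (logb 2 n)]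
    _ = _ := hpow.symm

theorem exists_pow_mul_lt_and_div_le_pow (hn : 3 ≤ n) (hd : 0 < d)
    (hlog : 24 * √(logb 2 d * logb 2 (logb 2 n)) < logb 2 d) :
    ∃ q r : ℕ, 0 < q ∧
      (q : ℝ) ^ (r + 2) * (8 * ((Nat.log 2 n + 1 : ℝ) + 1) ^ 2) ^ (r + 1) < d ∧
      d / 2 ^ (24 * √(logb 2 d * logb 2 (logb 2 n))) ≤ (q : ℝ) ^ (r + 1) := by
  set y := logb 2 d
  set β := logb 2 (logb 2 n)
  have hβ : 1 / 2 ≤ β := half_le_logb_logb hn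
  have hy : 0 ≤ y := (by positivity : (0 : ℝ) ≤ _).trans hlog.le
  have hd_eq : d = 2 ^ y := (rpow_logb two_pos (by norm_num) hd).symm
  have hsqrt : √(y * (7 + 2 * β)) ≤ 4 * √(y * β) :=
    calc √(y * (7 + 2 * β)) ≤ √(4 ^ 2 * (y * β)) := sqrt_le_sqrt (by nlinarith)
      _ = 4 * √(y * β) := by rw [sqrt_mul (by norm_num), sqrt_sq (by norm_num)]
  obtain ⟨s, r, hlt, hle⟩ := exists_nat_mul_add_lt (l := 7 + 2 * β) (y := y) (by linarith)
    (by linarith)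
  refine ⟨2 ^ s, r, by positivity, ?_, ?_⟩
  · calc ((2 ^ s : ℕ) : ℝ) ^ (r + 2) * (8 * ((Nat.log 2 n + 1 : ℝ) + 1) ^ 2) ^ (r + 1)
      _ ≤ ((2 ^ s : ℕ) : ℝ) ^ (r + 2) * (2 ^ (7 + 2 * β)) ^ (r + 1) := by
        gcongr
        exact eight_mul_sq_log_le (by omega)
      _ = 2 ^ (s * (r + 2) + (7 + 2 * β) * (r + 1)) := by
        rw [rpow_add two_pos (s * _), rpow_mul zero_le_two s, rpow_mul zero_le_two (7 + _)]
        norm_cast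
      _ < 2 ^ y := rpow_lt_rpow_of_exponent_lt one_lt_two hlt
      _ = d := hd_eq.symm
  · calc d / 2 ^ (24 * √(y * β)) = 2 ^ (y - 24 * √(y * β)) := by rw [hd_eq, rpow_sub two_pos]
      _ ≤ 2 ^ (s * (r + 1) : ℝ) := rpow_le_rpow_of_exponent_le one_le_two (by linarith)
      _ = ((2 ^ s : ℕ) : ℝ) ^ (r + 1) := by
        rw [rpow_mul zero_le_two]
        norm_cast

theorem div_two_rpow_le_one {x : ℝ} (hd : 0 < d) (h : logb 2 d ≤ x) : d / 2 ^ x ≤ 1 :=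
  div_le_one_of_le₀ ((logb_le_iff_le_rpow one_lt_two hd).1 h) (by positivity)

end Parameters

section AverageDegree

open Real

variable [Fintype V] {d : ℝ}

theorem card_pos_of_average_degree_pos (hd : d = 2 * G.edgeSet.ncard / Fintype.card V)
    (hd_pos : 0 < d) : 0 < Fintype.card V := by
  refine Nat.pos_of_ne_zero fun hV => hd_pos.ne' ?_
  rw [hd, hV, Nat.cast_zero, div_zero]

theorem average_degree_mul_card (hd : d = 2 * G.edgeSet.ncard / Fintype.card V) (hd_pos : 0 < d) :
    d * Fintype.card V = (arcs G).card := by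
  have hV : (Fintype.card V : ℝ) ≠ 0 := mod_cast (card_pos_of_average_degree_pos hd hd_pos).ne'
  rw [card_arcs, Nat.cast_mul, Nat.cast_two, hd, div_mul_cancel₀ _ hV]

theorem three_le_card_of_two_le_average_degree
    (hd : d = 2 * G.edgeSet.ncard / Fintype.card V) (hd_two : 2 ≤ d) : 3 ≤ Fintype.card V := by
  have hd_pos : 0 < d := two_pos.trans_le hd_two
  have hoff : arcs G ⊆ Finset.univ.offDiag := fun p hp => by simpa using (mem_arcs.1 hp).ne
  have hle : 2 * Fintype.card V ≤ Fintype.card V * Fintype.card V - Fintype.card V :=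
    calc 2 * Fintype.card V ≤ (arcs G).card := by
          have := mul_le_mul_of_nonneg_right hd_two (Fintype.card V).cast_nonneg
          rw [average_degree_mul_card hd hd_pos] at this
          exact_mod_cast this
      _ ≤ _ := (Finset.card_le_card hoff).trans_eq (Finset.offDiag_card _)
  have hV := card_pos_of_average_degree_pos hd hd_pos
  by_contra! hlt
  interval_cases Fintype.card V <;> omega

theorem exists_hasMonotonePath (hw : IsProperLabeling G w) (hn : 3 ≤ Fintype.card V) (hd : 0 < d)
    (hcard : d * Fintype.card V = (arcs G).card) :
    ∃ v k, HasMonotonePath G w 0 ∅ v k ∧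
      d / 2 ^ (24 * √(logb 2 d * logb 2 (logb 2 (Fintype.card V)))) ≤ (k : ℝ) := by
  have hsupport : G.support ⊆ (Finset.univ : Finset V) := by simp
  have hV : (0 : ℝ) < Fintype.card V := by positivity
  rcases le_or_gt (logb 2 d) (24 * √(logb 2 d * logb 2 (logb 2 (Fintype.card V)))) with hlog | hlog
  · have harcs : 0 < (arcs G).card := by exact_mod_cast hcard ▸ mul_pos hd hV
    obtain ⟨v, hv⟩ := densityForces_zero_one G Finset.univ hw hsupport (by simpa using harcs)
    exact ⟨v, 1, hv, by simpa using div_two_rpow_le_one hd hlog⟩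
  · obtain ⟨q, r, hq, hlt, hle⟩ := exists_pow_mul_lt_and_div_le_pow hn hd hlog
    have hdense := (mul_lt_mul_of_pos_right hlt hV).trans_eq hcard
    obtain ⟨v, hv⟩ := densityForces_pow hq (Nat.lt_pow_succ_log_self one_lt_two _) r G Finset.univ
      hw hsupport (by exact_mod_cast hdense)
    exact ⟨v, _, hv.mono le_rfl (Nat.le_mul_of_pos_right _ (Nat.succ_pos _)), by exact_mod_cast hle⟩

end AverageDegree

end EO

theorem stmt14_general :
    ∃ C : ℝ, 0 < C ∧
      ∀ (V : Type*) [Fintype V] (G : SimpleGraph V) (wt : Sym2 V → ℕ), EO.IsProperLabeling G wt →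
        ∀ d : ℝ, d = 2 * (G.edgeSet.ncard : ℝ) / (Fintype.card V : ℝ) → 2 ≤ d →
        ∃ (u v : V) (p : G.Walk u v), p.IsPath ∧ EO.Increasing wt p.edges ∧
          d / (2 : ℝ) ^ (C * √(Real.logb 2 d * Real.logb 2 (Real.logb 2 (Fintype.card V : ℝ))))
            ≤ (p.length : ℝ) := by
  refine ⟨24, by norm_num, fun V _ G wt hwt d hd hd_two => ?_⟩
  have hd_pos : 0 < d := two_pos.trans_le hd_two
  obtain ⟨u, k, ⟨v, p, hp, hk⟩, hle⟩ := EO.exists_hasMonotonePath hwt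
    (EO.three_le_card_of_two_le_average_degree hd hd_two) hd_pos
    (EO.average_degree_mul_card hd hd_pos)
  exact ⟨u, v, p, hp.isPath, hp.increasing, hle.trans (by exact_mod_cast hk)⟩

/-- Theorem 1.2.  There is an absolute constant `C > 0` such that for
every `n`-vertex graph `G` with average degree `d ≥ 2` and every edge-ordering of `G`,
there is a monotone (increasing) path of length at least
`d / 2^(C·√(log₂ d · log₂ log₂ n))`. -/
theorem stmt14 :
    ∃ C : ℝ, 0 < C ∧
      ∀ (n : ℕ) (G : SimpleGraph (Fin n)) (wt : Sym2 (Fin n) → ℕ),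
        Function.Injective wt →
        ∀ d : ℝ, d = 2 * (G.edgeSet.ncard : ℝ) / (n : ℝ) → 2 ≤ d →
        ∃ (u v : Fin n) (p : G.Walk u v), p.IsPath ∧ EO.Increasing wt p.edges ∧
          d / (2 : ℝ) ^ (C * Real.sqrt (Real.logb 2 d * Real.logb 2 (Real.logb 2 (n : ℝ))))
            ≤ (p.length : ℝ) := by
  obtain ⟨C, hC, h⟩ := stmt14_general
  exact ⟨C, hC, fun n G wt hwt => by
    simpa using h (Fin n) G wt fun _ _ _ _ _ huv => Sym2.congr_right.1 (hwt huv)⟩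
end

section
/- Every edge-ordering of the complete graph K_n contains a monotone path of length at least n / 2^{C√(log₂ n · log₂ log₂ n)} for some absolute constant C; in particular, every edge-ordering of K_n contains a monotone path of length n^{1−o(1)}. -/
open scoped Classical

/-!
Think of the label of an edge as the moment at which it can be crossed. The claim "average degree
`D` forces a monotone path of length `L`" is bootstrapped: from `(D, L)` one gets roughly
`(12 g λ² D, min (g L) (6 D))` with `λ ≈ log₂ n`, and iterating with `g` a growing power of `b ≈ λ²`
gives the pairs `(b ^ (k + 1).choose 2, b ^ k.choose 2)`, whose ratio is `n ^ o(1)` for the largest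
`k` with `b ^ (k + 1).choose 2 < n / 2`.

For the bootstrap step, a vertex has level `r + 1` at time `t` if it has many edges leaving after
`t` after which both endpoints still have level `r`. Charging every edge to its endpoint of lower
level shows that a dense graph has a vertex of high level. From such a vertex, look at the sets of
vertices reached by walks of `0, 1, 2, …` steps that each lose at most one level. These sets cannot
double `λ` times, so at some point the edges between two consecutive sets are dense and contain a
monotone path of length `L` by assumption; attaching it to the short walk reaching it costs a
factor `λ` only. Levels allow this to be repeated `g λ` times, each time avoiding the vertices
already used.
-/

namespace EO

variable {V : Type*} {wt : Sym2 V → ℕ} {H K : Finset (Sym2 V)}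

section Walks

variable {t t' : ℕ} {u v : V} {l l₁ l₂ : List V}

/-- Monotone walks: `v :: l` is the vertex sequence of a walk with edges in `H`, with increasing
labels, all of them at least the starting time `t`. Crossing an edge `e` takes from time `wt e` to
time `wt e + 1`. -/
def IsMonotoneWalk (wt : Sym2 V → ℕ) (H : Finset (Sym2 V)) : ℕ → V → List V → Prop
  | _, _, [] => True
  | t, v, w :: l => s(v, w) ∈ H ∧ t ≤ wt s(v, w) ∧ IsMonotoneWalk wt H (wt s(v, w) + 1) w l

/-- The time at which the walk `v :: l` started at time `t` arrives at its last vertex,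
which is `l.getLastD v`. -/
def arrival (wt : Sym2 V → ℕ) : ℕ → V → List V → ℕ
  | t, _, [] => t
  | _, v, w :: l => arrival wt (wt s(v, w) + 1) w l

theorem IsMonotoneWalk.mono_time (h : IsMonotoneWalk wt H t v l) (ht : t' ≤ t) :
    IsMonotoneWalk wt H t' v l := by
  cases l with
  | nil => trivial
  | cons w l => exact ⟨h.1, ht.trans h.2.1, h.2.2⟩

theorem IsMonotoneWalk.mono_edges (h : IsMonotoneWalk wt K t v l) (hKH : K ⊆ H) :
    IsMonotoneWalk wt H t v l := by
  induction l generalizing t v with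
  | nil => trivial
  | cons w l ih => exact ⟨hKH h.1, h.2.1, ih h.2.2⟩

theorem IsMonotoneWalk.le_arrival (h : IsMonotoneWalk wt H t v l) : t ≤ arrival wt t v l := by
  induction l generalizing t v with
  | nil => rfl
  | cons w l ih => exact (h.2.1.trans (Nat.le_succ _)).trans (ih h.2.2)

theorem arrival_mono (ht : t' ≤ t) : arrival wt t' v l ≤ arrival wt t v l := by
  cases l with
  | nil => exact ht
  | cons w l => rfl

theorem arrival_append :
    arrival wt t v (l₁ ++ l₂) = arrival wt (arrival wt t v l₁) (l₁.getLastD v) l₂ := by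
  induction l₁ generalizing t v with
  | nil => rfl
  | cons w l₁ ih => simp only [List.cons_append, arrival, ih, List.getLastD_cons]

theorem isMonotoneWalk_append :
    IsMonotoneWalk wt H t v (l₁ ++ l₂) ↔
      IsMonotoneWalk wt H t v l₁ ∧
        IsMonotoneWalk wt H (arrival wt t v l₁) (l₁.getLastD v) l₂ := by
  induction l₁ generalizing t v with
  | nil => exact (and_iff_right trivial).symm
  | cons w l₁ ih =>
    simp only [List.cons_append, IsMonotoneWalk, arrival, ih, List.getLastD_cons, and_assoc]

theorem IsMonotoneWalk.of_append_cons (h : IsMonotoneWalk wt H t u (l₁ ++ v :: l₂)) :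
    IsMonotoneWalk wt H t v l₂ ∧ arrival wt t v l₂ ≤ arrival wt t u (l₁ ++ v :: l₂) := by
  rw [List.append_cons, isMonotoneWalk_append, List.getLastD_concat] at h
  rw [List.append_cons, arrival_append, List.getLastD_concat]
  exact ⟨h.2.mono_time h.1.le_arrival, arrival_mono h.1.le_arrival⟩

theorem IsMonotoneWalk.mem_of_subset_sym2 {S : Finset V} (h : IsMonotoneWalk wt H t v l)
    (hHS : H ⊆ S.sym2) : ∀ x ∈ l, x ∈ S := by
  induction l generalizing t v with
  | nil => simp
  | cons w l ih =>
    exact List.forall_mem_cons.2 ⟨(Finset.mk_mem_sym2_iff.1 (hHS h.1)).2, ih h.2.2⟩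

theorem IsMonotoneWalk.exists_nodup (h : IsMonotoneWalk wt H t v l) :
    ∃ p, IsMonotoneWalk wt H t v p ∧ (v :: p).Nodup ∧ p ⊆ l ∧ p.length ≤ l.length ∧
      p.getLastD v = l.getLastD v ∧ arrival wt t v p ≤ arrival wt t v l := by
  induction l generalizing t v with
  | nil => exact ⟨[], h, by simp, by simp, le_rfl, rfl, le_rfl⟩
  | cons w l ih =>
    obtain ⟨p, hp, hnd, hsub, hlen, hlast, harr⟩ := ih h.2.2
    have hwp : IsMonotoneWalk wt H t v (w :: p) := ⟨h.1, h.2.1, hp⟩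
    have hwsub : w :: p ⊆ w :: l := List.cons_subset_cons w hsub
    by_cases hv : v ∈ w :: p
    · obtain ⟨p₁, p₂, heq⟩ := List.append_of_mem hv
      rw [heq] at hwp hnd hwsub
      obtain ⟨hp₂, hle⟩ := hwp.of_append_cons
      refine ⟨p₂, hp₂, hnd.of_append_right, fun x hx => hwsub (by simp [hx]), ?_, ?_, ?_⟩
      · have := congrArg List.length heq
        simp only [List.length_cons, List.length_append] at this ⊢
        omega
      · rw [List.getLastD_cons, ← hlast, ← List.getLastD_cons (a := v) (b := w), heq]
        simp [List.getLast?_cons]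
      · rw [← heq] at hle
        exact hle.trans harr
    · exact ⟨w :: p, hwp, List.nodup_cons.2 ⟨hv, hnd⟩, hwsub, Nat.succ_le_succ hlen,
        by simpa only [List.getLastD_cons] using hlast, harr⟩

/-- A long path `q` can be attached to a short path `p`. If the start `v` of `p` lies on `q`, then
either the part of `q` after `v` is long enough, or the part before it is and avoids `v`. -/
theorem IsMonotoneWalk.exists_nodup_of_append_of_nodup {p q : List V}
    (hp : IsMonotoneWalk wt H t v p) (hpnd : (v :: p).Nodup)
    (hq : IsMonotoneWalk wt H (arrival wt t v p) (p.getLastD v) q)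
    (hqnd : (p.getLastD v :: q).Nodup) :
    ∃ l, IsMonotoneWalk wt H t v l ∧ (v :: l).Nodup ∧ l ⊆ p ++ q ∧
      q.length < (p.length + 1) * (l.length + 1) := by
  induction p generalizing t v q with
  | nil => exact ⟨q, hq, hqnd, by simp, by simp⟩
  | cons w p ih =>
    obtain ⟨hvp, hpnd⟩ := List.nodup_cons.1 hpnd
    rw [List.getLastD_cons] at hq hqnd
    have hcons {l q' : List V} (hl : IsMonotoneWalk wt H (wt s(v, w) + 1) w l)
        (hnd : (w :: l).Nodup) (hsub : l ⊆ p ++ q') (hvq' : v ∉ q') :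
        IsMonotoneWalk wt H t v (w :: l) ∧ (v :: w :: l).Nodup :=
      ⟨⟨hp.1, hp.2.1, hl⟩, List.nodup_cons.2 ⟨by grind, hnd⟩⟩
    by_cases hvq : v ∈ q
    · obtain ⟨q₁, q₂, rfl, hvq₁⟩ := List.eq_append_cons_of_mem hvq
      rw [← List.cons_append] at hqnd
      obtain ⟨l, hl, hnd, hsub, hlen⟩ :=
        ih hp.2.2 hpnd (isMonotoneWalk_append.1 hq).1 hqnd.of_append_left
      simp only [List.length_append, List.length_cons]
      rcases le_or_gt q₂.length (l.length + 1) with hle | hlt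
      · obtain ⟨hl', hnd'⟩ := hcons hl hnd hsub hvq₁
        refine ⟨w :: l, hl', hnd', by grind, ?_⟩
        rw [List.length_cons]
        nlinarith
      · refine ⟨q₂, hq.of_append_cons.1.mono_time hp.le_arrival, hqnd.of_append_right,
          by grind, ?_⟩
        nlinarith
    · obtain ⟨l, hl, hnd, hsub, hlen⟩ := ih hp.2.2 hpnd hq hqnd
      obtain ⟨hl', hnd'⟩ := hcons hl hnd hsub hvq
      refine ⟨w :: l, hl', hnd', by grind, ?_⟩
      simp only [List.length_cons]
      nlinarith

theorem IsMonotoneWalk.exists_nodup_of_append {q : List V} (hl : IsMonotoneWalk wt H t v l)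
    (hq : IsMonotoneWalk wt H (arrival wt t v l) (l.getLastD v) q)
    (hqnd : (l.getLastD v :: q).Nodup) :
    ∃ p, IsMonotoneWalk wt H t v p ∧ (v :: p).Nodup ∧ p ⊆ l ++ q ∧
      q.length < (l.length + 1) * (p.length + 1) := by
  obtain ⟨l', hl', hnd', hsub', hlen', hlast, harr⟩ := hl.exists_nodup
  rw [← hlast] at hq hqnd
  obtain ⟨p, hp, hnd, hsub, hlen⟩ :=
    hl'.exists_nodup_of_append_of_nodup hnd' (hq.mono_time harr) hqnd
  refine ⟨p, hp, hnd, List.Subset.trans hsub ?_, hlen.trans_le (by gcongr)⟩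
  exact List.append_subset.2
    ⟨List.subset_append_of_subset_left q hsub', List.subset_append_right l q⟩

end Walks

section Levels

variable {δ r r' t t' m : ℕ} {v : V}

/-- The level of a vertex at a given time: `v` has level at least `r + 1` at time `t` if it has `δ`
edges in `H`, labelled at least `t`, after each of which both endpoints have level at least `r`. -/
def HasLevel (wt : Sym2 V → ℕ) (H : Finset (Sym2 V)) (δ : ℕ) : ℕ → V → ℕ → Prop
  | 0, _, _ => True
  | r + 1, v, t => ∃ O : Finset V, δ ≤ O.card ∧ ∀ w ∈ O, s(v, w) ∈ H ∧ t ≤ wt s(v, w) ∧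
      HasLevel wt H δ r w (wt s(v, w) + 1) ∧ HasLevel wt H δ r v (wt s(v, w) + 1)

theorem HasLevel.mono_time (h : HasLevel wt H δ r v t) (ht : t' ≤ t) :
    HasLevel wt H δ r v t' := by
  cases r with
  | zero => trivial
  | succ r =>
    obtain ⟨O, hcard, hO⟩ := h
    exact ⟨O, hcard, fun w hw => ⟨(hO w hw).1, ht.trans (hO w hw).2.1, (hO w hw).2.2⟩⟩

theorem HasLevel.of_succ (h : HasLevel wt H δ (r + 1) v t) : HasLevel wt H δ r v t := by
  induction r generalizing v t with
  | zero => trivial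
  | succ r ih =>
    obtain ⟨O, hcard, hO⟩ := h
    refine ⟨O, hcard, fun w hw => ?_⟩
    obtain ⟨hvw, ht, hw, hv⟩ := hO w hw
    exact ⟨hvw, ht, ih hw, ih hv⟩

theorem HasLevel.mono_level (h : HasLevel wt H δ r v t) (hr : r' ≤ r) :
    HasLevel wt H δ r' v t := by
  induction r, hr using Nat.le_induction with
  | base => exact h
  | succ r _ ih => exact ih h.of_succ

/-- Proper edge labellings of the complete graph: distinct edges sharing a vertex have distinct
labels. The labels of loops are irrelevant. -/
def IsProperLabelling (wt : Sym2 V → ℕ) : Prop :=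
  ∀ v, Set.InjOn (fun w => wt s(v, w)) {v}ᶜ

/-- Drop the earliest of the given edges: `v` has all the others still ahead of it. -/
theorem IsProperLabelling.exists_hasLevel_succ (hwt : IsProperLabelling wt) {P : Finset V}
    (hP : δ < P.card) (hvP : v ∉ P)
    (hlevel : ∀ w ∈ P, s(v, w) ∈ H ∧ HasLevel wt H δ r w (wt s(v, w) + 1) ∧
      HasLevel wt H δ r v (wt s(v, w) + 1)) :
    ∃ w ∈ P, HasLevel wt H δ (r + 1) v (wt s(v, w) + 1) := by
  obtain ⟨w₀, hw₀, hmin⟩ :=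
    Finset.exists_min_image P (fun w => wt s(v, w)) (Finset.card_pos.1 (Nat.zero_lt_of_lt hP))
  refine ⟨w₀, hw₀, P.erase w₀, ?_, fun w hw => ?_⟩
  · rw [Finset.card_erase_of_mem hw₀]
    omega
  · obtain ⟨hne, hwP⟩ := Finset.mem_erase.1 hw
    obtain ⟨hH, hw, hv⟩ := hlevel w hwP
    have hlt : wt s(v, w₀) < wt s(v, w) :=
      (hmin w hwP).lt_of_ne fun heq =>
        hne (hwt v (ne_of_mem_of_not_mem hw₀ hvP) (ne_of_mem_of_not_mem hwP hvP) heq).symm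
    exact ⟨hH, hlt, hw, hv⟩

/-- The level of `v` at time `t`, truncated at `m`. -/
noncomputable def level (wt : Sym2 V → ℕ) (H : Finset (Sym2 V)) (δ m : ℕ) (v : V) (t : ℕ) : ℕ :=
  Nat.findGreatest (fun k => HasLevel wt H δ k v t) m

theorem hasLevel_level : HasLevel wt H δ (level wt H δ m v t) v t :=
  Nat.findGreatest_spec (P := fun k => HasLevel wt H δ k v t) (Nat.zero_le m) trivial

theorem HasLevel.le_level (h : HasLevel wt H δ r v t) (hr : r ≤ m) : r ≤ level wt H δ m v t :=
  Nat.le_findGreatest hr h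

theorem level_lt (h : ¬ HasLevel wt H δ m v 0) : level wt H δ m v t < m := by
  refine (Nat.findGreatest_le m).lt_of_ne fun heq => h ?_
  have hlevel : HasLevel wt H δ (level wt H δ m v t) v t := hasLevel_level
  rw [level, heq] at hlevel
  exact hlevel.mono_time (Nat.zero_le t)

/-- The edges charged to `v` at level `r`, given by their other endpoints in `S`. -/
noncomputable def charged (wt : Sym2 V → ℕ) (H : Finset (Sym2 V)) (S : Finset V) (δ m : ℕ)
    (v : V) (r : ℕ) : Finset V :=
  {w ∈ S | s(v, w) ∈ H ∧ level wt H δ m v (wt s(v, w) + 1) = r ∧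
    r ≤ level wt H δ m w (wt s(v, w) + 1)}

variable {S : Finset V}

theorem IsProperLabelling.card_charged_le (hwt : IsProperLabelling wt)
    (hH : ∀ e ∈ H, ¬ e.IsDiag) (hr : r < m) : (charged wt H S δ m v r).card ≤ δ := by
  by_contra! hlt
  have hmem {w : V} (hw : w ∈ charged wt H S δ m v r) := (Finset.mem_filter.1 hw).2
  obtain ⟨w, hw, hlevel⟩ := hwt.exists_hasLevel_succ (r := r) hlt
    (fun hv => hH _ (hmem hv).1 rfl) fun w hw => by
      obtain ⟨hvw, hlv, hlw⟩ := hmem hw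
      exact ⟨hvw, hasLevel_level.mono_level hlw, hasLevel_level.mono_level hlv.ge⟩
  have hge := hlevel.le_level (m := m) hr
  have heq := (hmem hw).2.1
  omega

theorem exists_mem_charged (hHS : H ⊆ S.sym2) {e : Sym2 V} (he : e ∈ H) :
    ∃ v ∈ S, ∃ w, e = s(v, w) ∧
      w ∈ charged wt H S δ m v (level wt H δ m v (wt e + 1)) := by
  induction e using Sym2.ind with
  | _ a b =>
    obtain ⟨ha, hb⟩ := Finset.mk_mem_sym2_iff.1 (hHS he)
    rcases le_total (level wt H δ m a (wt s(a, b) + 1)) (level wt H δ m b (wt s(a, b) + 1))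
      with hab | hba
    · exact ⟨a, ha, b, rfl, Finset.mem_filter.2 ⟨hb, he, rfl, hab⟩⟩
    · refine ⟨b, hb, a, Sym2.eq_swap, ?_⟩
      rw [Sym2.eq_swap] at he hba ⊢
      exact Finset.mem_filter.2 ⟨ha, he, rfl, hba⟩

theorem IsProperLabelling.exists_hasLevel (hwt : IsProperLabelling wt)
    (hH : ∀ e ∈ H, ¬ e.IsDiag) (hHS : H ⊆ S.sym2) (hcard : δ * m * S.card < H.card) :
    ∃ v, HasLevel wt H δ m v 0 := by
  by_contra! hnone
  have hcover : H ⊆ (S ×ˢ Finset.range m).biUnion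
      fun p => (charged wt H S δ m p.1 p.2).image fun w => s(p.1, w) := by
    intro e he
    obtain ⟨v, hv, w, hvw, hw⟩ := exists_mem_charged (wt := wt) (δ := δ) (m := m) hHS he
    refine Finset.mem_biUnion.2 ⟨(v, level wt H δ m v (wt e + 1)), ?_,
      Finset.mem_image.2 ⟨w, hw, hvw.symm⟩⟩
    exact Finset.mem_product.2 ⟨hv, Finset.mem_range.2 (level_lt (hnone v))⟩
  refine hcard.not_ge ?_
  calc H.card ≤ (S ×ˢ Finset.range m).card * δ :=
        (Finset.card_le_card hcover).trans <| Finset.card_biUnion_le_card_mul _ _ _ fun p hp =>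
          Finset.card_image_le.trans <|
            hwt.card_charged_le hH (Finset.mem_range.1 (Finset.mem_product.1 hp).2)
    _ = δ * m * S.card := by rw [Finset.card_product, Finset.card_range]; ring

end Levels

/-- The property that every loopless graph with at least `D` times as many edges as vertices
contains a monotone path of length `L`. The graph is given by its edge set `A` and a vertex set `S`
containing all endpoints. -/
def ForcesPath (wt : Sym2 V → ℕ) (D L : ℕ) : Prop :=
  ∀ (A : Finset (Sym2 V)) (S : Finset V), S.Nonempty → (∀ e ∈ A, ¬ e.IsDiag) → A ⊆ S.sym2 →
    D * S.card ≤ A.card →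
      ∃ v l, IsMonotoneWalk wt A 0 v l ∧ (v :: l).Nodup ∧ L ≤ l.length

theorem forcesPath_one_one : ForcesPath wt 1 1 := by
  intro A S hS hA _ hcard
  obtain ⟨e, he⟩ : A.Nonempty := Finset.card_pos.1 (by have := hS.card_pos; omega)
  induction e using Sym2.ind with
  | _ a b => exact ⟨a, [b], ⟨he, Nat.zero_le _, trivial⟩, by simpa using hA _ he, le_rfl⟩

section Stars

variable {R S : Finset V} {O : V → Finset V} {D L : ℕ}

/-- The edges joining each `y ∈ R` to the vertices of `O y`. -/
noncomputable def starEdges (R : Finset V) (O : V → Finset V) : Finset (Sym2 V) :=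
  (R.sigma O).image fun p => s(p.1, p.2)

theorem mem_starEdges {e : Sym2 V} : e ∈ starEdges R O ↔ ∃ y ∈ R, ∃ w ∈ O y, s(y, w) = e := by
  simp only [starEdges, Finset.mem_image, Finset.mem_sigma, Sigma.exists]
  grind

theorem sum_card_le_two_mul_card_starEdges :
    ∑ y ∈ R, (O y).card ≤ 2 * (starEdges R O).card := by
  rw [← Finset.card_sigma]
  refine Finset.card_le_mul_card_image _ 2 fun e _ => ?_
  induction e using Sym2.ind with
  | _ a b =>
    refine (Finset.card_le_card (t := {⟨a, b⟩, ⟨b, a⟩}) ?_).trans Finset.card_le_two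
    rintro ⟨x, y⟩ hxy
    rcases Sym2.eq_iff.1 (Finset.mem_filter.1 hxy).2 with ⟨rfl, rfl⟩ | ⟨rfl, rfl⟩ <;> simp

/-- If the stars of the vertices `y ∈ R` fit into few vertices, then they are dense. The first edge
of the resulting path belongs to the star of some `y ∈ R`, so the path or its tail starts there. -/
theorem ForcesPath.exists_path_of_stars (hP : ForcesPath wt D L) {τ : V → ℕ}
    (hK : ∀ e ∈ K, ¬ e.IsDiag) (hR : R.Nonempty) (hS : S.card ≤ 2 * R.card)
    (hcard : ∀ y ∈ R, 6 * D ≤ (O y).card)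
    (hO : ∀ y ∈ R, ∀ w ∈ O y, w ∈ S ∧ s(y, w) ∈ K ∧ τ y ≤ wt s(y, w)) :
    ∃ y ∈ R, ∃ q, IsMonotoneWalk wt K (τ y) y q ∧ (y :: q).Nodup ∧
      (∀ x ∈ q, x ∈ R ∪ S) ∧ L ≤ q.length + 1 := by
  have hAK : starEdges R O ⊆ K := by
    intro e he
    obtain ⟨y, hy, w, hw, rfl⟩ := mem_starEdges.1 he
    exact (hO y hy w hw).2.1
  have hAS : starEdges R O ⊆ (R ∪ S).sym2 := by
    intro e he
    obtain ⟨y, hy, w, hw, rfl⟩ := mem_starEdges.1 he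
    exact Finset.mk_mem_sym2_iff.2
      ⟨Finset.mem_union_left _ hy, Finset.mem_union_right _ (hO y hy w hw).1⟩
  have hdense : D * (R ∪ S).card ≤ (starEdges R O).card := by
    have hunion : (R ∪ S).card ≤ 3 * R.card := by
      have := Finset.card_union_le R S
      omega
    have hsum : R.card * (6 * D) ≤ ∑ y ∈ R, (O y).card :=
      Finset.card_nsmul_le_sum R _ _ hcard
    have hstars := sum_card_le_two_mul_card_starEdges (R := R) (O := O)
    nlinarith
  obtain ⟨a, l, hl, hnd, hlen⟩ :=
    hP _ _ (hR.mono Finset.subset_union_left) (fun e he => hK e (hAK he)) hAS hdense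
  have hmem := hl.mem_of_subset_sym2 hAS
  cases l with
  | nil =>
    obtain ⟨y, hy⟩ := hR
    exact ⟨y, hy, [], trivial, List.nodup_singleton y, by simp, Nat.le_succ_of_le hlen⟩
  | cons b l =>
    obtain ⟨y, hy, w, hw, hab⟩ := mem_starEdges.1 hl.1
    have hτ : τ y ≤ wt s(a, b) := hab ▸ (hO y hy w hw).2.2
    rcases Sym2.eq_iff.1 hab with ⟨rfl, rfl⟩ | ⟨rfl, rfl⟩
    · exact ⟨y, hy, w :: l, ⟨hAK hl.1, hτ, hl.2.2.mono_edges hAK⟩, hnd, hmem,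
        Nat.le_succ_of_le hlen⟩
    · exact ⟨y, hy, l, (hl.2.2.mono_edges hAK).mono_time (Nat.le_succ_of_le hτ),
        (List.nodup_cons.1 hnd).2, fun x hx => hmem x (List.mem_cons_of_mem _ hx), hlen⟩

end Stars

section Routes

variable {U : Finset V} {δ ρ t i j D L m : ℕ} {v : V} {W : List V}

/-- The edges of `H` after which both endpoints still have level at least `ρ`. -/
noncomputable def core (wt : Sym2 V → ℕ) (H : Finset (Sym2 V)) (δ ρ : ℕ) : Finset (Sym2 V) :=
  {e ∈ H | ∀ x ∈ e, HasLevel wt H δ ρ x (wt e + 1)}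

theorem core_subset : core wt H δ ρ ⊆ H :=
  Finset.filter_subset _ _

theorem IsMonotoneWalk.hasLevel_arrival {l : List V}
    (h : IsMonotoneWalk wt (core wt H δ ρ) t v l) (hv : HasLevel wt H δ ρ v t) :
    HasLevel wt H δ ρ (l.getLastD v) (arrival wt t v l) := by
  induction l generalizing t v with
  | nil => exact hv
  | cons w l ih =>
    rw [List.getLastD_cons]
    exact ih h.2.2 ((Finset.mem_filter.1 h.1).2 w (Sym2.mem_mk_right v w))

/-- Monotone walks in the core from `v` at time `t` that avoid `U` after the start and whose last
vertex has level at least `j` on arrival. -/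
structure IsRoute (wt : Sym2 V → ℕ) (H : Finset (Sym2 V)) (δ ρ : ℕ) (U : Finset V) (v : V)
    (t j : ℕ) (W : List V) : Prop where
  walk : IsMonotoneWalk wt (core wt H δ ρ) t v W
  avoids : ∀ x ∈ W, x ∉ U
  level : HasLevel wt H δ j (W.getLastD v) (arrival wt t v W)

theorem IsRoute.exists_extensions (h : IsRoute wt H δ ρ U v t (j + 1) W) (hρ : ρ ≤ j) :
    ∃ O : Finset V, δ ≤ O.card + U.card ∧ ∀ w ∈ O,
      s(W.getLastD v, w) ∈ core wt H δ ρ ∧ arrival wt t v W ≤ wt s(W.getLastD v, w) ∧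
        IsRoute wt H δ ρ U v t j (W ++ [w]) := by
  obtain ⟨O, hcard, hO⟩ := h.level
  refine ⟨O \ U, ?_, fun w hw => ?_⟩
  · have := Finset.le_card_sdiff U O
    omega
  obtain ⟨hwO, hwU⟩ := Finset.mem_sdiff.1 hw
  obtain ⟨hH, hle, hw, hy⟩ := hO w hwO
  have hcore : s(W.getLastD v, w) ∈ core wt H δ ρ := by
    refine Finset.mem_filter.2 ⟨hH, Sym2.ball.2 ⟨hy.mono_level hρ, hw.mono_level hρ⟩⟩
  refine ⟨hcore, hle, isMonotoneWalk_append.2 ⟨h.walk, hcore, hle, trivial⟩,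
    List.forall_mem_append.2 ⟨h.avoids, by simpa using hwU⟩, ?_⟩
  rw [List.getLastD_concat, arrival_append]
  exact hw

variable [Fintype V]

/-- The last vertices of the routes of length `i`. -/
noncomputable def reachSet (wt : Sym2 V → ℕ) (H : Finset (Sym2 V)) (δ ρ : ℕ) (U : Finset V) (v : V)
    (t i j : ℕ) : Finset V :=
  {y | ∃ W, IsRoute wt H δ ρ U v t j W ∧ W.length = i ∧ W.getLastD v = y}

theorem mem_reachSet {y : V} : y ∈ reachSet wt H δ ρ U v t i j ↔
    ∃ W, IsRoute wt H δ ρ U v t j W ∧ W.length = i ∧ W.getLastD v = y := by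
  simp only [reachSet, Finset.mem_filter_univ]

theorem notMem_of_mem_reachSet {y : V} (hy : y ∈ reachSet wt H δ ρ U v t i j) (hne : y ≠ v) :
    y ∉ U := by
  obtain ⟨W, hW, -, rfl⟩ := mem_reachSet.1 hy
  exact hW.avoids _ ((List.mem_cons.1 List.getLastD_mem_cons).resolve_left hne)

theorem ForcesPath.exists_path_or_two_mul_card_reachSet_le (hP : ForcesPath wt D L)
    (hH : ∀ e ∈ H, ¬ e.IsDiag) (hU : U.card ≤ 6 * D) (hρ : ρ ≤ j) :
    (∃ l, IsMonotoneWalk wt (core wt H (12 * D) ρ) t v l ∧ (v :: l).Nodup ∧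
      (∀ x ∈ l, x ∉ U) ∧ L ≤ (i + 1) * (l.length + 1)) ∨
    2 * (reachSet wt H (12 * D) ρ U v t i (j + 1)).card ≤
      (reachSet wt H (12 * D) ρ U v t (i + 1) j).card := by
  refine or_iff_not_imp_right.2 fun hsmall => ?_
  have hroute : ∀ y ∈ reachSet wt H (12 * D) ρ U v t i (j + 1), ∃ W,
      IsRoute wt H (12 * D) ρ U v t (j + 1) W ∧ W.length = i ∧ W.getLastD v = y :=
    fun y hy => mem_reachSet.1 hy
  choose! W hW hlen hlast using hroute
  have hext := fun y hy => (hW y hy).exists_extensions hρ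
  choose! O hOcard hO using hext
  obtain ⟨y, hy, q, hq, hqnd, hqmem, hqlen⟩ :=
    hP.exists_path_of_stars (K := core wt H (12 * D) ρ) (τ := fun y => arrival wt t v (W y))
      (S := reachSet wt H (12 * D) ρ U v t (i + 1) j) (O := O)
      (fun e he => hH e (core_subset he))
      (Finset.card_pos.1 (by omega)) (not_le.1 hsmall).le
      (fun y hy => by have := hOcard y hy; omega)
      (fun y hy w hw => by
        obtain ⟨hcore, hle, hwroute⟩ := hO y hy w hw
        rw [hlast y hy] at hcore hle
        exact ⟨mem_reachSet.2 ⟨_, hwroute, by simp [hlen y hy], List.getLastD_concat⟩, hcore, hle⟩)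
  obtain ⟨l, hl, hnd, hsub, hllen⟩ := (hW y hy).walk.exists_nodup_of_append (q := q)
    (by rwa [hlast y hy]) (by rwa [hlast y hy])
  refine ⟨l, hl, hnd, fun x hx => ?_, by rw [hlen y hy] at hllen; omega⟩
  have hxv : x ≠ v := ne_of_mem_of_not_mem hx (List.nodup_cons.1 hnd).1
  rcases List.mem_append.1 (hsub hx) with hxW | hxq
  · exact (hW y hy).avoids x hxW
  · exact (Finset.mem_union.1 (hqmem x hxq)).elim
      (notMem_of_mem_reachSet · hxv) (notMem_of_mem_reachSet · hxv)

/-- The sets reached after `0, 1, …, m` steps cannot all double in size. -/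
theorem ForcesPath.exists_path_of_hasLevel (hP : ForcesPath wt D L)
    (hH : ∀ e ∈ H, ¬ e.IsDiag) (hm : Fintype.card V < 2 ^ m) (hU : U.card ≤ 6 * D)
    (hv : HasLevel wt H (12 * D) (ρ + m) v t) :
    ∃ l, IsMonotoneWalk wt H t v l ∧ (v :: l).Nodup ∧ (∀ x ∈ l, x ∉ U) ∧
      L ≤ m * (l.length + 1) ∧ HasLevel wt H (12 * D) ρ (l.getLastD v) (arrival wt t v l) := by
  by_contra hnone
  have hgrow (i r : ℕ) (hir : i + r = m) :
      2 ^ i ≤ (reachSet wt H (12 * D) ρ U v t i (ρ + r)).card := by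
    induction i generalizing r with
    | zero =>
      obtain rfl : r = m := by omega
      exact Finset.card_pos.2 ⟨v, mem_reachSet.2 ⟨[], ⟨trivial, by simp, hv⟩, rfl, rfl⟩⟩
    | succ i ih =>
      have hdouble := (hP.exists_path_or_two_mul_card_reachSet_le (t := t) (v := v) (i := i) hH hU
        (Nat.le_add_right ρ r)).resolve_left fun ⟨l, hl, hnd, havoid, hlen⟩ =>
          hnone ⟨l, hl.mono_edges core_subset, hnd, havoid,
            hlen.trans (Nat.mul_le_mul_right _ (by omega)),
            hl.hasLevel_arrival (hv.mono_level (Nat.le_add_right ρ m))⟩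
      have hi := ih (r + 1) (by omega)
      rw [← add_assoc] at hi
      omega
  have hcard := (hgrow m 0 rfl).trans (Finset.card_le_univ _)
  omega

/-- One extra step before applying `exists_path_of_hasLevel` makes the path nonempty. -/
theorem ForcesPath.exists_nonempty_path_of_hasLevel (hP : ForcesPath wt D L)
    (hH : ∀ e ∈ H, ¬ e.IsDiag) (hm : Fintype.card V < 2 ^ m) (hU : U.card < 6 * D)
    (hv : HasLevel wt H (12 * D) (ρ + m + 1) v t) :
    ∃ l, IsMonotoneWalk wt H t v l ∧ l.Nodup ∧ (∀ x ∈ l, x ∉ U) ∧ L ≤ m * l.length ∧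
      HasLevel wt H (12 * D) ρ (l.getLastD v) (arrival wt t v l) := by
  obtain ⟨O, hO, hOlevel⟩ := hv
  obtain ⟨w, hwO, hwU⟩ : ∃ w ∈ O, w ∉ U := Finset.exists_mem_notMem_of_card_lt_card (by omega)
  obtain ⟨hvw, ht, hw, -⟩ := hOlevel w hwO
  obtain ⟨l, hl, hnd, havoid, hlen, hlevel⟩ := hP.exists_path_of_hasLevel hH hm hU.le hw
  refine ⟨w :: l, ⟨hvw, ht, hl⟩, hnd, List.forall_mem_cons.2 ⟨hwU, havoid⟩, hlen, ?_⟩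
  rw [List.getLastD_cons]
  exact hlevel

theorem ForcesPath.exists_long_path_of_hasLevel (hP : ForcesPath wt D L)
    (hH : ∀ e ∈ H, ¬ e.IsDiag) (hm : Fintype.card V < 2 ^ m) {g : ℕ}
    (hv : HasLevel wt H (12 * D) (g * (m + 1)) v t) :
    ∃ l, IsMonotoneWalk wt H t v l ∧ l.Nodup ∧ (∀ x ∈ l, x ∉ U) ∧
      (g * L ≤ m * l.length ∨ 6 * D ≤ U.card + l.length) := by
  induction g generalizing v t U with
  | zero => exact ⟨[], trivial, by simp, by simp, by simp⟩
  | succ g ih =>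
    rcases le_or_gt (6 * D) U.card with hU | hU
    · exact ⟨[], trivial, by simp, by simp, Or.inr hU⟩
    rw [add_one_mul, ← add_assoc] at hv
    obtain ⟨l₁, hl₁, hnd₁, havoid₁, hlen₁, hlevel⟩ :=
      hP.exists_nonempty_path_of_hasLevel hH hm hU hv
    obtain ⟨l₂, hl₂, hnd₂, havoid₂, hlen₂⟩ := ih (U := U ∪ l₁.toFinset) hlevel
    have hdisj : List.Disjoint l₁ l₂ := fun x hx₁ hx₂ => havoid₂ x hx₂ (by simp [hx₁])
    refine ⟨l₁ ++ l₂, isMonotoneWalk_append.2 ⟨hl₁, hl₂⟩, hnd₁.append hnd₂ hdisj,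
      List.forall_mem_append.2 ⟨havoid₁, fun x hx hxU => havoid₂ x hx (by simp [hxU])⟩, ?_⟩
    rw [List.length_append]
    refine hlen₂.imp (fun h => ?_) fun h => ?_
    · calc (g + 1) * L = L + g * L := by ring
        _ ≤ m * l₁.length + m * l₂.length := add_le_add hlen₁ h
        _ = m * (l₁.length + l₂.length) := by ring
    · have := Finset.card_union_le U l₁.toFinset
      have := l₁.toFinset_card_le
      omega

theorem ForcesPath.bootstrap (hP : ForcesPath wt D L) (hwt : IsProperLabelling wt)
    (hm : Fintype.card V < 2 ^ m) (hm0 : 0 < m) {g D' L' : ℕ}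
    (hD' : 12 * D * (g * m * (m + 1)) < D') (hL' : L' ≤ g * L) (hL'D : L' < 6 * D) :
    ForcesPath wt D' L' := by
  intro A S hS hA hAS hcard
  have hdense : 12 * D * (g * m * (m + 1)) * S.card < A.card :=
    (Nat.mul_lt_mul_of_pos_right hD' hS.card_pos).trans_le hcard
  obtain ⟨v, hv⟩ := hwt.exists_hasLevel hA hAS hdense
  obtain ⟨l, hl, hnd, havoid, hlen⟩ := hP.exists_long_path_of_hasLevel (U := {v}) hA hm hv
  refine ⟨v, l, hl, List.nodup_cons.2 ⟨fun h => havoid v h (by simp), hnd⟩, ?_⟩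
  rcases hlen with hlen | hlen
  · refine hL'.trans (Nat.le_of_mul_le_mul_left ?_ hm0)
    rwa [← mul_assoc, mul_comm m g]
  · rw [Finset.card_singleton] at hlen
    omega

theorem choose_two_succ (k : ℕ) : (k + 1).choose 2 = k + k.choose 2 := by
  rw [Nat.choose_succ_succ', Nat.choose_one_right]

theorem IsProperLabelling.forcesPath_pow (hwt : IsProperLabelling wt)
    (hm : Fintype.card V < 2 ^ m) (hm0 : 0 < m) (k : ℕ) :
    ForcesPath wt ((13 * m * (m + 1)) ^ (k + 1).choose 2) ((13 * m * (m + 1)) ^ k.choose 2) := by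
  set b := 13 * m * (m + 1) with hb
  have hsucc (k : ℕ) : b ^ (k + 1).choose 2 = b ^ k * b ^ k.choose 2 := by
    rw [choose_two_succ, pow_add]
  induction k with
  | zero => exact forcesPath_one_one
  | succ k ih =>
    have hpos : 0 < b ^ (k + 1).choose 2 := by positivity
    refine ih.bootstrap hwt hm hm0 (g := b ^ k) ?_ (hsucc k).le (by omega)
    calc 12 * b ^ (k + 1).choose 2 * (b ^ k * m * (m + 1))
        < 13 * b ^ (k + 1).choose 2 * (b ^ k * m * (m + 1)) := by gcongr; norm_num
      _ = b ^ k * b * b ^ (k + 1).choose 2 := by rw [hb]; ring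
      _ = b ^ (k + 1 + 1).choose 2 := by rw [hsucc (k + 1), pow_succ]

end Routes

section CompleteGraph

theorem IsMonotoneWalk.exists_walk {t : ℕ} {v : V} {l : List V} (h : IsMonotoneWalk wt H t v l)
    (hnd : (v :: l).Nodup) :
    ∃ (u : V) (p : (⊤ : SimpleGraph V).Walk v u), p.support = v :: l ∧ Increasing wt p.edges ∧
      ∀ e ∈ p.edges, t ≤ wt e := by
  induction l generalizing t v with
  | nil => exact ⟨v, .nil, rfl, List.isChain_nil, by simp⟩
  | cons w l ih =>
    obtain ⟨hv, hnd⟩ := List.nodup_cons.1 hnd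
    obtain ⟨u, p, hsupp, hinc, hge⟩ := ih h.2.2 hnd
    have hadj : (⊤ : SimpleGraph V).Adj v w := fun heq => hv (heq ▸ List.mem_cons_self)
    refine ⟨u, .cons hadj p, by rw [SimpleGraph.Walk.support_cons, hsupp], ?_, ?_⟩
    · exact List.isChain_cons.2 ⟨fun e he => hge e (List.mem_of_mem_head? he), hinc⟩
    · rw [SimpleGraph.Walk.edges_cons]
      exact List.forall_mem_cons.2
        ⟨h.2.1, fun e he => h.2.1.trans ((Nat.le_succ _).trans (hge e he))⟩

variable [Fintype V]

theorem ForcesPath.exists_isPath {D L : ℕ} (hP : ForcesPath wt D L)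
    (hD : 2 * D < Fintype.card V) :
    ∃ (u v : V) (p : (⊤ : SimpleGraph V).Walk u v),
      p.IsPath ∧ Increasing wt p.edges ∧ L ≤ p.length := by
  have hdense : D * (Finset.univ : Finset V).card ≤ (⊤ : SimpleGraph V).edgeFinset.card := by
    rw [SimpleGraph.card_edgeFinset_top_eq_card_choose_two, Finset.card_univ, Nat.choose_two_right,
      Nat.le_div_iff_mul_le two_pos, mul_right_comm, mul_comm (D * 2), mul_comm D]
    exact Nat.mul_le_mul_left _ (Nat.le_sub_one_of_lt hD)
  obtain ⟨u, l, hl, hnd, hlen⟩ := hP (⊤ : SimpleGraph V).edgeFinset Finset.univ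
    (Finset.card_pos.1 (Nat.zero_lt_of_lt hD))
    (fun e he => SimpleGraph.not_isDiag_of_mem_edgeFinset he) (by simp) hdense
  obtain ⟨v, p, hsupp, hinc, -⟩ := hl.exists_walk hnd
  refine ⟨u, v, p, SimpleGraph.Walk.isPath_def p |>.2 (hsupp ▸ hnd), hinc, hlen.trans_eq ?_⟩
  have := p.length_support
  rw [hsupp, List.length_cons] at this
  omega

end CompleteGraph

section Estimates

open Real

theorem exists_two_mul_pow_choose_lt_le {b n : ℕ} (hb : 1 < b) (hn : 2 < n) :
    ∃ k : ℕ, 2 * b ^ (k + 1).choose 2 < n ∧ n ≤ 2 * b ^ (2 * k + 1) * b ^ k.choose 2 := by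
  have hmono : StrictMono fun k : ℕ => 2 * b ^ (k + 1).choose 2 := by
    refine strictMono_nat_of_lt_succ fun k => ?_
    have : (k + 1).choose 2 < (k + 1 + 1).choose 2 := by
      rw [choose_two_succ (k + 1)]
      omega
    gcongr
  obtain ⟨k, hlt, hle⟩ :=
    hmono.exists_between_of_tendsto_atTop hmono.tendsto_atTop (x := n) (by simpa using hn)
  refine ⟨k, hlt, hle.trans_eq ?_⟩
  rw [choose_two_succ (k + 1), choose_two_succ k]
  ring

theorem three_halves_le_logb_two {n : ℕ} (hn : 3 ≤ n) : 3 / 2 ≤ logb 2 n := by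
  have hsq : 2 ^ 3 ≤ (n : ℝ) ^ 2 := by
    have : (3 : ℝ) ≤ n := mod_cast hn
    nlinarith
  have hlog := logb_le_logb_of_le one_lt_two (by norm_num) hsq
  rw [logb_pow, logb_pow, logb_self_eq_one one_lt_two] at hlog
  push_cast at hlog
  linarith

theorem half_le_logb_two {ℓ : ℝ} (hℓ : 3 / 2 ≤ ℓ) : 1 / 2 ≤ logb 2 ℓ := by
  have hlog := logb_le_logb_of_le one_lt_two two_pos (by nlinarith : 2 ≤ ℓ ^ 2)
  rw [logb_pow, logb_self_eq_one one_lt_two] at hlog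
  push_cast at hlog
  linarith

theorem thirteen_mul_mul_succ_le_pow {m ℓ : ℝ} (hm0 : 0 ≤ m) (hm : m ≤ ℓ + 1) (hℓ : 3 / 2 ≤ ℓ) :
    13 * m * (m + 1) ≤ ℓ ^ 12 := by
  have hpow : 51 ≤ ℓ ^ 10 := by
    calc (51 : ℝ) ≤ (3 / 2) ^ 10 := by norm_num
      _ ≤ ℓ ^ 10 := by gcongr
  calc 13 * m * (m + 1) ≤ 13 * (ℓ + 1) * (ℓ + 1 + 1) := by gcongr
    _ ≤ 51 * ℓ ^ 2 := by nlinarith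
    _ ≤ ℓ ^ 10 * ℓ ^ 2 := by gcongr
    _ = ℓ ^ 12 := by ring

theorem logb_two_le_self {x : ℝ} (hx : 1 ≤ x) : logb 2 x ≤ x := by
  rw [logb_le_iff_le_rpow one_lt_two (by positivity)]
  have hbernoulli : 1 + x * 1 ≤ (1 + 1) ^ x :=
    one_add_mul_self_le_rpow_one_add (by norm_num) hx
  rw [one_add_one_eq_two] at hbernoulli
  linarith

theorem sq_mul_logb_le_of_pow_choose_le {ℓ b : ℝ} {k : ℕ} (hb : 1 ≤ b)
    (hk : b ^ (k + 1).choose 2 ≤ 2 ^ ℓ) : k ^ 2 * logb 2 b ≤ 2 * ℓ := by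
  have hlog := (logb_le_iff_le_rpow one_lt_two (by positivity)).2 hk
  rw [logb_pow, Nat.cast_choose_two] at hlog
  push_cast at hlog
  have : 0 ≤ k * logb 2 b := mul_nonneg k.cast_nonneg (logb_nonneg one_lt_two hb)
  linarith

theorem two_mul_pow_le_two_rpow {ℓ b : ℝ} {k : ℕ} (hℓ : 3 / 2 ≤ ℓ) (hb : 1 ≤ b)
    (hbℓ : b ≤ ℓ ^ 12) (hk : b ^ (k + 1).choose 2 ≤ 2 ^ ℓ) :
    2 * b ^ (2 * k + 1) ≤ 2 ^ (24 * √(ℓ * logb 2 ℓ)) := by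
  have ha : logb 2 b ≤ 12 * logb 2 ℓ := by
    have := logb_le_logb_of_le one_lt_two (by positivity) hbℓ
    rwa [logb_pow] at this
  have hka := sq_mul_logb_le_of_pow_choose_le hb hk
  have ha0 : 0 ≤ logb 2 b := logb_nonneg one_lt_two hb
  have hx := half_le_logb_two hℓ
  have hxℓ := logb_two_le_self (by linarith : 1 ≤ ℓ)
  have hlogb : 2 ^ logb 2 b = b := rpow_logb two_pos one_lt_two.ne' (by positivity)
  set x := logb 2 ℓ
  set a := logb 2 b
  have hxX : x ≤ √(ℓ * x) := le_sqrt_of_sq_le (by nlinarith)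
  have hkaX : k * a ≤ 5 * √(ℓ * x) := by
    refine le_of_sq_le_sq ?_ (by positivity)
    calc (k * a) ^ 2 = k ^ 2 * a * a := by ring
      _ ≤ 2 * ℓ * (12 * x) := by gcongr
      _ ≤ 25 * (ℓ * x) := by nlinarith
      _ = (5 * √(ℓ * x)) ^ 2 := by rw [mul_pow, sq_sqrt (by positivity)]; norm_num
  calc 2 * b ^ (2 * k + 1) = 2 ^ (1 + (2 * k + 1) * a) := by
        rw [rpow_add two_pos, rpow_one, mul_comm _ a, rpow_mul two_pos.le, hlogb, ← rpow_natCast]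
        push_cast
        rfl
    _ ≤ 2 ^ (24 * √(ℓ * x)) := rpow_le_rpow_of_exponent_le one_lt_two.le (by linarith)

end Estimates

end EO

theorem stmt15_general {V : Type*} [Fintype V] (hV : 3 ≤ Fintype.card V) {wt : Sym2 V → ℕ}
    (hwt : EO.IsProperLabelling wt) :
    ∃ (u v : V) (p : (⊤ : SimpleGraph V).Walk u v),
      p.IsPath ∧ EO.Increasing wt p.edges ∧
      (Fintype.card V : ℝ) / (2 : ℝ) ^
          (24 * √(Real.logb 2 (Fintype.card V) * Real.logb 2 (Real.logb 2 (Fintype.card V)))) ≤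
        p.length := by
  set n := Fintype.card V
  set m := Nat.log 2 n + 1 with hm
  have hm0 : 0 < m := Nat.succ_pos _
  set b := 13 * m * (m + 1) with hb
  have hb1 : 1 < b := by nlinarith
  obtain ⟨k, hlt, hle⟩ := EO.exists_two_mul_pow_choose_lt_le hb1 hV
  obtain ⟨u, v, p, hp, hinc, hlen⟩ :=
    (hwt.forcesPath_pow (Nat.lt_pow_succ_log_self one_lt_two n) hm0 k).exists_isPath hlt
  have hℓ := EO.three_halves_le_logb_two hV
  have hbℓ : (b : ℝ) ≤ Real.logb 2 n ^ 12 := by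
    have hmℓ : (m : ℝ) ≤ Real.logb 2 n + 1 := by
      rw [hm, Nat.cast_succ]
      exact add_le_add_left (mod_cast Real.natLog_le_logb n 2) 1
    exact_mod_cast EO.thirteen_mul_mul_succ_le_pow m.cast_nonneg hmℓ hℓ
  have hbk : (b : ℝ) ^ (k + 1).choose 2 ≤ 2 ^ Real.logb 2 n := by
    rw [Real.rpow_logb two_pos one_lt_two.ne' (by positivity)]
    exact_mod_cast (by omega : b ^ (k + 1).choose 2 ≤ n)
  refine ⟨u, v, p, hp, hinc, (div_le_iff₀' (by positivity)).2 ?_⟩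
  calc (n : ℝ) ≤ 2 * b ^ (2 * k + 1) * b ^ k.choose 2 := mod_cast hle
    _ ≤ 2 ^ (24 * √(Real.logb 2 n * Real.logb 2 (Real.logb 2 n))) * p.length := by
      gcongr
      · exact EO.two_mul_pow_le_two_rpow hℓ (mod_cast hb1.le) hbℓ hbk
      · exact_mod_cast hlen

/-- Theorem 1.1.  There is an absolute constant `C > 0` such that every
edge-ordering of the complete graph `K_n` (for `n ≥ 3`) contains a monotone (increasing)
path of length at least `n / 2^(C·√(log₂ n · log₂ log₂ n))`; in particular, every
edge-ordering of `K_n` contains a monotone path of length `n^(1−o(1))`. -/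
theorem stmt15 :
    ∃ C : ℝ, 0 < C ∧
      ∀ n : ℕ, 3 ≤ n → ∀ wt : Sym2 (Fin n) → ℕ, Function.Injective wt →
        ∃ (u v : Fin n) (p : (⊤ : SimpleGraph (Fin n)).Walk u v),
          p.IsPath ∧ EO.Increasing wt p.edges ∧
          (n : ℝ) /
              (2 : ℝ) ^ (C * Real.sqrt (Real.logb 2 (n : ℝ) * Real.logb 2 (Real.logb 2 (n : ℝ))))
            ≤ (p.length : ℝ) := by
  refine ⟨24, by norm_num, fun n hn wt hwt => ?_⟩
  simpa only [Fintype.card_fin] using stmt15_general ((Fintype.card_fin n).symm ▸ hn)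
    fun v w _ w' _ h => Sym2.congr_right.1 (hwt h)
end
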